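/- Let Λ be a finite simple graph that is a linear forest. Then for any finite simple graph Γ, if there is an injective group homomorphism from G(Λ) into G(Γ), then Λ embeds into Γ as a full (induced) subgraph. -/

import Mathlib

open SimpleGraph

/-- The set of commutator relations of a graph: one commutator for each edge. -/
def raagRels {V : Type} (G : SimpleGraph V) : Set (FreeGroup V) :=
  {r | ∃ u v : V, G.Adj u v ∧
    r = FreeGroup.of u * FreeGroup.of v * (FreeGroup.of u)⁻¹ * (FreeGroup.of v)⁻¹}

/-- The right-angled Artin group `A(G)` of a graph `G`. -/
abbrev RAAG {V : Type} (G : SimpleGraph V) : Type := PresentedGroup (raagRels G)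

/-- `G(Γ) = A(Γᶜ)`, the RAAG on the complement graph. -/
abbrev GG {V : Type} (G : SimpleGraph V) : Type := RAAG Gᶜ

/-- A linear forest: an acyclic graph all of whose vertices have degree at most 2. -/
def IsLinearForest {V : Type} (G : SimpleGraph V) : Prop :=
  G.IsAcyclic ∧ ∀ v : V, (G.neighborSet v).ncard ≤ 2

/-- The star of a vertex: the vertex together with its neighbours. -/
def starSet {V : Type} (G : SimpleGraph V) (v : V) : Set V :=
  insert v (G.neighborSet v)

/-- The double `D_v(G)` of `G` along the star of `v`: original vertices together with
copies of the vertices outside the star. -/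
def GraphDouble {V : Type} (G : SimpleGraph V) (v : V) :
    SimpleGraph (V ⊕ {w : V // w ∉ starSet G v}) :=
  SimpleGraph.fromRel (fun x y =>
    match x, y with
    | Sum.inl a, Sum.inl b => G.Adj a b
    | Sum.inr a, Sum.inr b => G.Adj a.1 b.1
    | Sum.inl a, Sum.inr b => a ∈ starSet G v ∧ G.Adj a b.1
    | Sum.inr _, Sum.inl _ => False)

/-- Subdivision of the edge `[v,w]` of `Λ`, with `none` as the new vertex. -/
def SubdivEdge {V : Type} (Λ : SimpleGraph V) (v w : V) : SimpleGraph (Option V) :=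
  SimpleGraph.fromRel (fun x y =>
    match x, y with
    | some a, some b => Λ.Adj a b ∧ ¬((a = v ∧ b = w) ∨ (a = w ∧ b = v))
    | some a, none => a = v ∨ a = w
    | none, some _ => False
    | none, none => False)

/-- The graph `Λ_u⁻(w₁,w₂)`, with `none` as the new vertex `v`. -/
def MinusGraph {V : Type} (Λ : SimpleGraph V) (u w₁ w₂ : V) : SimpleGraph (Option V) :=
  SimpleGraph.fromRel (fun x y =>
    match x, y with
    | some a, some b => Λ.Adj a b ∧
        ¬((a = u ∧ b = w₁) ∨ (a = w₁ ∧ b = u) ∨ (a = u ∧ b = w₂) ∨ (a = w₂ ∧ b = u))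
    | some a, none => a = w₁ ∨ a = u ∨ a = w₂
    | none, some _ => False
    | none, none => False)

/-- The graph `Λ_u⁺(w₁,w₂)`: `Λ_u⁻(w₁,w₂)` with the edge `[u,w₂]` added back. -/
def PlusGraph {V : Type} (Λ : SimpleGraph V) (u w₁ w₂ : V) : SimpleGraph (Option V) :=
  SimpleGraph.fromRel (fun x y =>
    (MinusGraph Λ u w₁ w₂).Adj x y ∨ (x = some u ∧ y = some w₂))

/-!
An element of a right-angled Artin group that cannot be conjugated into a smaller parabolic subgroup
than `⟨S⟩` commutes only with elements supported on `S` and on the vertices commuting with `S`; if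
`S` is connected in `Γ`, its centralizer is moreover virtually cyclic in the direction of `S`. Let
`I` be a component of the linear forest with at least one edge and `U` the rest. Up to conjugation,
a suitable element of `⟨I⟩` has an image with an essential support one of whose components `C` is
such that projecting to `⟨C⟩` stays injective on `⟨I⟩`; then `⟨U⟩`, which commutes with `⟨I⟩`, is
mapped into the group of the vertices commuting with `C`. Isolated vertices are split off similarly,
after `v` has been replaced by `v ^ m * u ^ (-l)`. By induction only the case of a path remains.

For a path, factor the images of the vertices into pure elements, those whose essential support is
connected. A nontrivial iterated commutator of the generators along the path forces a chain of such
factors whose non-commuting graph is the path. Each pure element can then be traded for a conjugate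
of a vertex without changing that graph. Finally, conjugates are shortened by folding along a vertex
`t`, Stallings style, in the Bass–Serre tree of the splitting of `G(Γ)` as an HNN extension with
stable letter `t`: a fold changes commutation only around `t`, and adding `t` itself to the family
restores an induced path. Once no conjugator is left, the path is an induced subgraph of `Γ`.
-/

namespace GG

variable {V : Type} {Γ : SimpleGraph V}

/-! ### Generators, retractions and parabolic subgroups -/

/-- The generator of `G(Γ)` attached to a vertex. -/
def of (v : V) : GG Γ := PresentedGroup.of v

theorem commute_of {u v : V} (h : ¬ Γ.Adj u v) : Commute (of u : GG Γ) (of v) := by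
  obtain rfl | huv := eq_or_ne u v
  · exact Commute.refl _
  have hrel := PresentedGroup.one_of_mem
    (show _ ∈ raagRels Γᶜ from ⟨u, v, (Γ.compl_adj u v).2 ⟨huv, h⟩, rfl⟩)
  simp only [map_mul, map_inv] at hrel
  exact mul_inv_eq_iff_eq_mul.1 (mul_inv_eq_one.1 hrel)

/-- The homomorphism out of `G(Γ)` with prescribed values on the generators: the universal
property of the presentation. -/
def lift {H : Type*} [Group H] (f : V → H)
    (hf : ∀ u v, u ≠ v → ¬ Γ.Adj u v → Commute (f u) (f v)) : GG Γ →* H :=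
  PresentedGroup.toGroup (f := f) <| by
    rintro r ⟨u, v, huv, rfl⟩
    obtain ⟨hne, hadj⟩ := (Γ.compl_adj u v).1 huv
    simp only [map_mul, map_inv, FreeGroup.lift_apply_of]
    exact mul_inv_eq_one.2 (mul_inv_eq_iff_eq_mul.2 (hf u v hne hadj))

@[simp]
theorem lift_of {H : Type*} [Group H] (f : V → H)
    (hf : ∀ u v, u ≠ v → ¬ Γ.Adj u v → Commute (f u) (f v)) (v : V) :
    lift f hf (of v) = f v :=
  PresentedGroup.toGroup.of _

theorem hom_ext {H : Type*} [Group H] {φ ψ : GG Γ →* H} (h : ∀ v, φ (of v) = ψ (of v)) :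
    φ = ψ :=
  PresentedGroup.ext h

theorem of_ne_one (v : V) : (of v : GG Γ) ≠ 1 := by
  intro h
  have := congrArg (lift (Γ := Γ) (fun _ => Multiplicative.ofAdd (1 : ℤ))
    fun _ _ _ _ => Commute.all _ _) h
  simp only [lift_of, map_one, ofAdd_eq_one, one_ne_zero] at this

/-- The parabolic subgroup of `G(Γ)` generated by the vertices in `S`. -/
def parabolic (S : Set V) : Subgroup (GG Γ) := Subgroup.closure (of '' S)

theorem of_mem_parabolic {S : Set V} {v : V} (h : v ∈ S) : (of v : GG Γ) ∈ parabolic S :=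
  Subgroup.subset_closure (Set.mem_image_of_mem _ h)

theorem parabolic_le_iff {S : Set V} {H : Subgroup (GG Γ)} :
    parabolic S ≤ H ↔ ∀ v ∈ S, of v ∈ H := by
  rw [parabolic, Subgroup.closure_le, Set.image_subset_iff]
  rfl

theorem parabolic_mono {S T : Set V} (h : S ⊆ T) :
    (parabolic S : Subgroup (GG Γ)) ≤ parabolic T :=
  Subgroup.closure_mono (Set.image_mono h)

theorem parabolic_induction {S : Set V} {p : GG Γ → Prop} (one : p 1)
    (mul : ∀ x y, p x → p y → p (x * y)) (inv : ∀ x, p x → p x⁻¹) (of : ∀ v ∈ S, p (of v))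
    {x : GG Γ} (hx : x ∈ parabolic S) : p x :=
  Subgroup.closure_induction (p := fun x _ => p x) (Set.forall_mem_image.2 of) one
    (fun x y _ _ => mul x y) (fun x _ => inv x) hx

theorem mem_parabolic_univ (g : GG Γ) : g ∈ parabolic (Set.univ : Set V) := by
  rw [parabolic, Set.image_univ, show Subgroup.closure (Set.range (of : V → GG Γ)) = ⊤ from
    PresentedGroup.closure_range_of _]
  exact Subgroup.mem_top g

@[elab_as_elim]
theorem induction_on {p : GG Γ → Prop} (x : GG Γ) (one : p 1)
    (mul : ∀ x y, p x → p y → p (x * y)) (inv : ∀ x, p x → p x⁻¹) (of : ∀ v, p (of v)) : p x :=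
  parabolic_induction one mul inv (fun v _ => of v) (mem_parabolic_univ x)

theorem parabolic_empty : (parabolic ∅ : Subgroup (GG Γ)) = ⊥ := by
  rw [parabolic, Set.image_empty, Subgroup.closure_empty]

open scoped Classical in
/-- The retraction of `G(Γ)` onto `parabolic S` that kills the vertices outside `S`, viewed as an
endomorphism of `G(Γ)` so that retractions compose. -/
noncomputable def retract (S : Set V) : GG Γ →* GG Γ :=
  lift (fun v => if v ∈ S then of v else 1) fun u v _ h => by
    split_ifs
    exacts [commute_of h, Commute.one_right _, Commute.one_left _, Commute.one_left _]

theorem retract_of_mem {S : Set V} {v : V} (h : v ∈ S) : retract S (of v : GG Γ) = of v := by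
  simp [retract, h]

theorem retract_of_notMem {S : Set V} {v : V} (h : v ∉ S) : retract S (of v : GG Γ) = 1 := by
  simp [retract, h]

theorem retract_mem (S : Set V) (g : GG Γ) : retract S g ∈ parabolic S := by
  induction g using induction_on with
  | one => rw [map_one]; exact one_mem _
  | mul x y hx hy => rw [map_mul]; exact mul_mem hx hy
  | inv x hx => rw [map_inv]; exact inv_mem hx
  | of v =>
    by_cases hv : v ∈ S
    · rw [retract_of_mem hv]; exact of_mem_parabolic hv
    · rw [retract_of_notMem hv]; exact one_mem _

theorem mem_parabolic_iff {S : Set V} {g : GG Γ} : g ∈ parabolic S ↔ retract S g = g := by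
  refine ⟨fun hg => ?_, fun hg => hg ▸ retract_mem S g⟩
  refine parabolic_induction (p := fun g => retract S g = g) (map_one _) ?_ ?_ ?_ hg
  · intro x y hx hy; rw [map_mul, hx, hy]
  · intro x hx; rw [map_inv, hx]
  · exact fun v hv => retract_of_mem hv

theorem retract_retract (S T : Set V) (g : GG Γ) :
    retract S (retract T g) = retract (S ∩ T) g := by
  suffices (retract S).comp (retract T) = (retract (S ∩ T) : GG Γ →* GG Γ) from
    DFunLike.congr_fun this g
  refine hom_ext fun v => ?_
  by_cases hS : v ∈ S <;> by_cases hT : v ∈ T <;> simp [retract, hS, hT]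

theorem retract_mem_inter {S T : Set V} {g : GG Γ} (h : g ∈ parabolic T) :
    retract S g ∈ parabolic (S ∩ T) := by
  rw [← mem_parabolic_iff.1 h, retract_retract]
  exact retract_mem _ _

theorem mem_parabolic_inter {S T : Set V} {g : GG Γ} (hS : g ∈ parabolic S)
    (hT : g ∈ parabolic T) : g ∈ parabolic (S ∩ T) := by
  rw [← mem_parabolic_iff.1 hS]
  exact retract_mem_inter hT

theorem of_mem_parabolic_iff {S : Set V} {v : V} : (of v : GG Γ) ∈ parabolic S ↔ v ∈ S := by
  refine ⟨fun h => ?_, of_mem_parabolic⟩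
  by_contra hv
  rw [mem_parabolic_iff, retract_of_notMem hv] at h
  exact of_ne_one v h.symm

theorem exists_finset_mem_parabolic (g : GG Γ) : ∃ T : Finset V, g ∈ parabolic (T : Set V) := by
  classical
  induction g using induction_on with
  | one => exact ⟨∅, one_mem _⟩
  | mul x y hx hy =>
    obtain ⟨⟨S, hS⟩, ⟨T, hT⟩⟩ := And.intro hx hy
    exact ⟨S ∪ T, mul_mem (parabolic_mono (by simp) hS) (parabolic_mono (by simp) hT)⟩
  | inv x hx => exact hx.imp fun _ => inv_mem
  | of v => exact ⟨{v}, of_mem_parabolic (by simp)⟩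

theorem mem_parabolic_of_forall {U : Set V} {g : GG Γ}
    (h : ∀ t ∉ U, g ∈ parabolic ({t}ᶜ : Set V)) : g ∈ parabolic U := by
  classical
  obtain ⟨T, hT⟩ := exists_finset_mem_parabolic g
  have remove : ∀ T : Finset V, g ∈ parabolic (U ∪ T) → g ∈ parabolic U := by
    intro T
    induction T using Finset.induction_on with
    | empty => simp
    | insert a T _ ih =>
      refine fun hg => ih ?_
      by_cases ha : a ∈ U
      · exact parabolic_mono (by grind) hg
      · exact parabolic_mono (by grind) (mem_parabolic_inter hg (h a ha))
  exact remove T (parabolic_mono Set.subset_union_right hT)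

/-- The vertices outside `S` that are adjacent to no vertex of `S`; equivalently those outside `S`
whose generators commute with `parabolic S`. -/
def perp (Γ : SimpleGraph V) (S : Set V) : Set V := {t | ∀ s ∈ S, s ≠ t ∧ ¬ Γ.Adj s t}

theorem mem_perp_singleton {s t : V} : t ∈ perp Γ {s} ↔ s ≠ t ∧ ¬ Γ.Adj s t := by simp [perp]

theorem perp_anti {S T : Set V} (h : S ⊆ T) : perp Γ T ⊆ perp Γ S := fun _ ht s hs => ht s (h hs)

theorem subset_perp_comm {S T : Set V} : T ⊆ perp Γ S ↔ S ⊆ perp Γ T :=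
  ⟨fun h _ hs _ ht => ⟨(h ht _ hs).1.symm, fun hts => (h ht _ hs).2 hts.symm⟩,
    fun h _ ht _ hs => ⟨(h hs _ ht).1.symm, fun hst => (h hs _ ht).2 hst.symm⟩⟩

theorem notMem_perp_of_mem {S : Set V} {x : V} (hx : x ∈ S) : x ∉ perp Γ S :=
  fun h => (h x hx).1 rfl

theorem commute_of_forall_commute {S : Set V} {z x : GG Γ} (h : ∀ v ∈ S, Commute z (of v))
    (hx : x ∈ parabolic S) : Commute z x :=
  parabolic_induction (p := Commute z) (Commute.one_right z) (fun _ _ => Commute.mul_right)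
    (fun _ => Commute.inv_right) h hx

theorem commute_of_subset_perp {S T : Set V} (h : T ⊆ perp Γ S) {x y : GG Γ}
    (hx : x ∈ parabolic S) (hy : y ∈ parabolic T) : Commute x y :=
  commute_of_forall_commute (fun _ ht =>
    (commute_of_forall_commute (fun _ hs => (commute_of (h ht _ hs).2).symm) hx).symm) hy

theorem retract_union {S T : Set V} (h : T ⊆ perp Γ S) (g : GG Γ) :
    retract (S ∪ T) g = retract S g * retract T g := by
  induction g using induction_on with
  | one => simp
  | mul x y hx hy =>
    have := commute_of_subset_perp h (retract_mem S y) (retract_mem T x)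
    simp only [map_mul, hx, hy, mul_assoc, this.left_comm]
  | inv x hx =>
    have := commute_of_subset_perp h (retract_mem S x) (retract_mem T x)
    simp only [map_inv, hx, mul_inv_rev, this.inv_inv.eq]
  | of v =>
    by_cases hS : v ∈ S
    · have hT : v ∉ T := fun hT => notMem_perp_of_mem hS (h hT)
      simp [retract, hS, hT]
    · by_cases hT : v ∈ T <;> simp [retract, hS, hT]

end GG

/-! ### The splitting of `G(Γ)` over a vertex -/

theorem freeGroup_toWord_map {α β : Type*} [DecidableEq α] [DecidableEq β] {f : α → β}
    (hf : Function.Injective f) (x : FreeGroup α) :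
    (FreeGroup.map f x).toWord = x.toWord.map fun p => (f p.1, p.2) := by
  conv_lhs => rw [← FreeGroup.mk_toWord (x := x), FreeGroup.map.mk, FreeGroup.toWord_mk]
  refine FreeGroup.IsReduced.reduce_eq ?_
  rw [FreeGroup.IsReduced, List.isChain_map]
  exact FreeGroup.isReduced_toWord.imp fun _ _ h hf' => h (hf hf')

namespace GG

variable {V : Type} {Γ : SimpleGraph V} {t : V}

/-- The cosets of the subgroup generated by the vertices, other than `t`, that commute with `t`.
They index a free basis of the kernel of `retract {t}ᶜ`: the coset of `g` stands for the conjugate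
`g * of t * g⁻¹`. -/
abbrev LinkCoset (Γ : SimpleGraph V) (t : V) : Type :=
  GG Γ ⧸ (parabolic (perp Γ {t}) : Subgroup (GG Γ))

/-- The action of `G(Γ)` on the free group on the link cosets of `t` by permutation of the basis;
it models conjugation on the kernel of `retract {t}ᶜ`. -/
noncomputable def cosetAut (t : V) : GG Γ →* MulAut (FreeGroup (LinkCoset Γ t)) where
  toFun g := FreeGroup.freeGroupCongr (MulAction.toPerm g)
  map_one' := MulEquiv.toMonoidHom_injective <| FreeGroup.ext_hom _ _ fun x => by simp
  map_mul' g h := MulEquiv.toMonoidHom_injective <| FreeGroup.ext_hom _ _ fun x => by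
    simp [mul_smul]

theorem cosetAut_of (t : V) (g : GG Γ) (x : LinkCoset Γ t) :
    cosetAut t g (FreeGroup.of x) = FreeGroup.of (g • x) := by
  simp [cosetAut]

theorem smul_mk_eq_self_iff {k x : GG Γ} :
    k • (QuotientGroup.mk x : LinkCoset Γ t) = QuotientGroup.mk x ↔
      x⁻¹ * k * x ∈ parabolic (perp Γ {t}) := by
  rw [MulAction.Quotient.smul_mk, QuotientGroup.eq, ← inv_mem_iff]
  simp [mul_assoc]

/-- The link coset of `1`, which stands for `of t` itself. -/
abbrev baseCoset (t : V) : LinkCoset Γ t := QuotientGroup.mk 1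

theorem smul_baseCoset_eq_self_iff {k : GG Γ} :
    k • (baseCoset t : LinkCoset Γ t) = baseCoset t ↔ k ∈ parabolic (perp Γ {t}) := by
  simpa using smul_mk_eq_self_iff (Γ := Γ) (t := t) (k := k) (x := 1)

open scoped Classical in
/-- The embedding of `G(Γ)` into a semidirect product that realizes `G(Γ)` as the extension of
`parabolic {t}ᶜ` by the free kernel of `retract {t}ᶜ`. -/
noncomputable def splitting (t : V) : GG Γ →* FreeGroup (LinkCoset Γ t) ⋊[cosetAut t] GG Γ :=
  lift (fun s => if s = t then SemidirectProduct.inl (FreeGroup.of (baseCoset t))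
      else SemidirectProduct.inr (of s)) <| by
    have commute_base : ∀ u, t ≠ u → ¬ Γ.Adj t u → Commute
        (SemidirectProduct.inl (FreeGroup.of (baseCoset t)) :
          FreeGroup (LinkCoset Γ t) ⋊[cosetAut t] GG Γ) (SemidirectProduct.inr (of u)) := by
      intro u hne hadj
      have hfix : (of u : GG Γ) • (baseCoset t : LinkCoset Γ t) = baseCoset t :=
        smul_baseCoset_eq_self_iff.2 (of_mem_parabolic (mem_perp_singleton.2 ⟨hne, hadj⟩))
      exact SemidirectProduct.ext (by simp [cosetAut_of, hfix]) (by simp)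
    intro u v huv h
    split_ifs with hu hv hv
    · exact Commute.refl _
    · subst hu; exact commute_base v huv h
    · subst hv; exact (commute_base u huv.symm fun h' => h h'.symm).symm
    · exact (commute_of h).map SemidirectProduct.inr

theorem splitting_of_self (t : V) : splitting t (of t : GG Γ) =
    SemidirectProduct.inl (FreeGroup.of (baseCoset t)) := by
  simp [splitting]

theorem splitting_of_ne {v : V} (h : v ≠ t) :
    splitting t (of v : GG Γ) = SemidirectProduct.inr (of v) := by
  simp [splitting, h]

/-- The component of `g` in the kernel of `retract {t}ᶜ`, as an element of a free group. It is a
cocycle, see `freePart_mul`. -/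
noncomputable def freePart (t : V) (g : GG Γ) : FreeGroup (LinkCoset Γ t) := (splitting t g).left

theorem splitting_right (t : V) (g : GG Γ) : (splitting t g).right = retract ({t}ᶜ : Set V) g := by
  suffices SemidirectProduct.rightHom.comp (splitting t) =
      (retract ({t}ᶜ : Set V) : GG Γ →* GG Γ) from DFunLike.congr_fun this g
  refine hom_ext fun v => ?_
  obtain rfl | h := eq_or_ne v t
  · simp [splitting_of_self, retract_of_notMem]
  · simp [splitting_of_ne h, retract_of_mem (show v ∈ ({t}ᶜ : Set V) from h)]

theorem freePart_mul (t : V) (g h : GG Γ) :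
    freePart t (g * h) = freePart t g * cosetAut t (retract ({t}ᶜ : Set V) g) (freePart t h) := by
  simp [freePart, map_mul, splitting_right]

theorem freePart_one (t : V) : freePart t (1 : GG Γ) = 1 := by simp [freePart]

theorem freePart_of_self (t : V) : freePart t (of t : GG Γ) = FreeGroup.of (baseCoset t) := by
  simp [freePart, splitting_of_self]

/-- The inclusion of the kernel of `retract {t}ᶜ`, sending a coset to the conjugate of `of t` it
stands for. -/
noncomputable def freeEval (t : V) : FreeGroup (LinkCoset Γ t) →* GG Γ :=
  FreeGroup.lift fun c => c.out * of t * c.out⁻¹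

theorem freeEval_of_mk (t : V) (x : GG Γ) :
    freeEval t (FreeGroup.of (QuotientGroup.mk x : LinkCoset Γ t)) = x * of t * x⁻¹ := by
  obtain ⟨h, hh⟩ := QuotientGroup.mk_out_eq_mul (parabolic (perp Γ {t})) x
  have hcomm : Commute (of t : GG Γ) h :=
    commute_of_subset_perp subset_rfl (of_mem_parabolic (Set.mem_singleton t)) h.2
  simp only [freeEval, FreeGroup.lift_apply_of]
  rw [hh, mul_inv_rev, mul_assoc x, ← hcomm.eq]
  group

theorem freeEval_cosetAut (t : V) (g : GG Γ) (v : FreeGroup (LinkCoset Γ t)) :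
    freeEval t (cosetAut t g v) = g * freeEval t v * g⁻¹ := by
  suffices (freeEval t).comp (cosetAut t g).toMonoidHom =
      (MulAut.conj g).toMonoidHom.comp (freeEval (Γ := Γ) t) from DFunLike.congr_fun this v
  refine FreeGroup.ext_hom _ _ fun x => ?_
  induction x using QuotientGroup.induction_on with
  | H x =>
    simp only [MonoidHom.comp_apply, MulEquiv.toMonoidHom_eq_coe, MonoidHom.coe_coe, cosetAut_of,
      MulAction.Quotient.smul_mk, freeEval_of_mk, MulAut.conj_apply, smul_eq_mul]
    group

theorem freeEval_mul_retract (t : V) (g : GG Γ) :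
    freeEval t (freePart t g) * retract ({t}ᶜ : Set V) g = g := by
  let recombine : GG Γ →* GG Γ := MonoidHom.mk'
    (fun g => freeEval t (freePart t g) * retract ({t}ᶜ : Set V) g) fun g h => by
      simp only [freePart_mul, map_mul, freeEval_cosetAut]
      group
  suffices recombine = MonoidHom.id _ from DFunLike.congr_fun this g
  refine hom_ext fun v => ?_
  change freeEval t (freePart t (of v)) * retract ({t}ᶜ : Set V) (of v) = of v
  obtain rfl | h := eq_or_ne v t
  · rw [freePart_of_self, freeEval_of_mk, retract_of_notMem (by simp)]
    group
  · rw [freePart, splitting_of_ne h, retract_of_mem (show v ∈ ({t}ᶜ : Set V) from h)]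
    simp

theorem freePart_eq_one_iff {g : GG Γ} : freePart t g = 1 ↔ g ∈ parabolic ({t}ᶜ : Set V) := by
  constructor <;> intro h
  · have := freeEval_mul_retract t g
    rwa [h, map_one, one_mul, ← mem_parabolic_iff] at this
  · suffices splitting t g = SemidirectProduct.inr g by simp [freePart, this]
    refine parabolic_induction (p := fun g => splitting t g = SemidirectProduct.inr g)
      (by simp) (fun x y hx hy => by simp [hx, hy]) (fun x hx => by simp [hx])
      (fun v hv => splitting_of_ne hv) h

/-- The affine action of `g` on the free group on the link cosets of `t`. Its points are the
vertices of the Bass–Serre tree of the splitting of `G(Γ)` as an HNN extension of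
`parabolic {t}ᶜ` with stable letter `of t`. -/
noncomputable def treeAct (t : V) (g : GG Γ) (v : FreeGroup (LinkCoset Γ t)) :
    FreeGroup (LinkCoset Γ t) :=
  freePart t g * cosetAut t (retract ({t}ᶜ : Set V) g) v

theorem treeAct_mul (t : V) (g h : GG Γ) (v : FreeGroup (LinkCoset Γ t)) :
    treeAct t (g * h) v = treeAct t g (treeAct t h v) := by
  simp [treeAct, freePart_mul, mul_assoc]

theorem treeAct_one (t : V) (v : FreeGroup (LinkCoset Γ t)) : treeAct t (1 : GG Γ) v = v := by
  simp [treeAct, freePart_one]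

theorem mem_parabolic_perp_of_commute {k : GG Γ} (hk : k ∈ parabolic ({t}ᶜ : Set V))
    (h : Commute k (of t)) : k ∈ parabolic (perp Γ {t}) := by
  have hfix := congrArg (freePart t) h.eq
  rw [freePart_mul, freePart_mul, freePart_eq_one_iff.2 hk, freePart_of_self,
    mem_parabolic_iff.1 hk] at hfix
  simp only [one_mul, map_one, mul_one, cosetAut_of] at hfix
  exact smul_baseCoset_eq_self_iff.1 (FreeGroup.of_injective hfix)

section Words

variable [DecidableEq (LinkCoset Γ t)]

theorem toWord_cosetAut (g : GG Γ) (v : FreeGroup (LinkCoset Γ t)) :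
    (cosetAut t g v).toWord = v.toWord.map fun p => (g • p.1, p.2) :=
  freeGroup_toWord_map (MulAction.injective g) v

theorem norm_cosetAut (g : GG Γ) (v : FreeGroup (LinkCoset Γ t)) :
    (cosetAut t g v).norm = v.norm := by
  simp [FreeGroup.norm, toWord_cosetAut]

theorem smul_eq_self_of_cosetAut_eq_self {k : GG Γ} {f : FreeGroup (LinkCoset Γ t)}
    (h : cosetAut t k f = f) {p : LinkCoset Γ t × Bool} (hp : p ∈ f.toWord) : k • p.1 = p.1 := by
  have hword := congrArg FreeGroup.toWord h
  rw [toWord_cosetAut] at hword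
  exact congrArg Prod.fst (List.map_inj_left.1 (hword.trans (List.map_id _).symm) p hp)

end Words

theorem cosetAut_freePart_of_commute {k z : GG Γ} (hk : k ∈ parabolic ({t}ᶜ : Set V))
    (h : Commute k z) : cosetAut t k (freePart t z) = freePart t z := by
  simpa [freePart_mul, freePart_eq_one_iff.2 hk, mem_parabolic_iff.1 hk]
    using congrArg (freePart t) h.eq

/-- Bass–Serre theory in disguise: if `z` moves the base vertex, then `k` fixes every edge on the
way from the base vertex to its image. -/
theorem mem_parabolic_or_conj_mem_of_commute {k z : GG Γ} (hk : k ∈ parabolic ({t}ᶜ : Set V))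
    (h : Commute z k) :
    z ∈ parabolic ({t}ᶜ : Set V) ∨ ∃ x, x⁻¹ * k * x ∈ parabolic (perp Γ {t}) := by
  classical
  rw [or_iff_not_imp_left, ← freePart_eq_one_iff]
  intro hne
  have hfix := cosetAut_freePart_of_commute hk h.symm
  obtain ⟨⟨c, b⟩, hp⟩ := List.exists_mem_of_ne_nil _ (mt FreeGroup.toWord_eq_nil_iff.1 hne)
  obtain ⟨x, rfl⟩ := QuotientGroup.mk_surjective c
  exact ⟨x, smul_mk_eq_self_iff.1 (smul_eq_self_of_cosetAut_eq_self hfix hp)⟩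

theorem eq_one_of_pow_eq_one {g : GG Γ} {n : ℕ} (hn : n ≠ 0) (h : g ^ n = 1) : g = 1 := by
  classical
  obtain ⟨s, hs⟩ := exists_finset_mem_parabolic g
  induction s using Finset.induction_on generalizing g with
  | empty => simpa [parabolic_empty] using hs
  | insert a s _ ih =>
    have hretract : retract ({a}ᶜ : Set V) g = 1 :=
      ih (by rw [← map_pow, h, map_one]) (parabolic_mono (by grind) (retract_mem_inter hs))
    have hfree : splitting a g = SemidirectProduct.inl (freePart a g) :=
      SemidirectProduct.ext (by simp [freePart]) (by simp [splitting_right, hretract])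
    have hpow := congrArg (splitting a) h
    rw [map_pow, hfree, ← map_pow, map_one, ← map_one SemidirectProduct.inl,
      SemidirectProduct.inl_inj, pow_eq_one_iff_left hn] at hpow
    rw [← freeEval_mul_retract a g, hpow, hretract, map_one, one_mul]

theorem eq_one_of_zpow_eq_one {g : GG Γ} {n : ℤ} (hn : n ≠ 0) (h : g ^ n = 1) : g = 1 := by
  obtain ⟨m, rfl | rfl⟩ := n.eq_nat_or_neg
  · exact eq_one_of_pow_eq_one (by simpa using hn) (by simpa using h)
  · exact eq_one_of_pow_eq_one (by simpa using hn) (by simpa using h)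

end GG

/-! ### Essential supports and the factorization into pure elements -/

theorem commute_conj_right_iff {G : Type*} [Group G] {z p k : G} :
    Commute z (p * k * p⁻¹) ↔ Commute (p⁻¹ * z * p) k := by
  rw [← Commute.conj_iff p⁻¹]
  simp [mul_assoc]

namespace GG

variable {V : Type} {Γ : SimpleGraph V} {S T C : Set V} {k z : GG Γ}

/-- `k` lies in `parabolic S`, but no conjugate of `k` lies in a smaller parabolic subgroup: up to
cyclic reduction the support of `k` is exactly `S`. -/
def IsEssential (S : Set V) (k : GG Γ) : Prop :=
  k ∈ parabolic S ∧ ∀ p, ∀ a ∈ S, p * k * p⁻¹ ∉ parabolic (S \ {a})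

theorem IsEssential.subset_of_conj_mem (h : IsEssential S k) {p : GG Γ}
    (hp : p * k * p⁻¹ ∈ parabolic T) : S ⊆ T := by
  intro a ha
  by_contra haT
  have hretract := retract_mem_inter (S := S) hp
  simp only [map_mul, map_inv, mem_parabolic_iff.1 h.1] at hretract
  exact h.2 _ a ha (parabolic_mono (by grind) hretract)

theorem IsEssential.ne_one (h : IsEssential S k) (hS : S.Nonempty) : k ≠ 1 := by
  rintro rfl
  exact hS.ne_empty (Set.subset_empty_iff.1 (h.subset_of_conj_mem (p := 1) (by simp)))

theorem exists_isEssential_conj {D : Set V} {g : GG Γ} (hg : g ∈ parabolic D) :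
    ∃ S ⊆ D, ∃ p ∈ parabolic D, ∃ k, IsEssential S k ∧ g = p * k * p⁻¹ := by
  wlog hD : D.Finite generalizing D
  · obtain ⟨T, hT⟩ := exists_finset_mem_parabolic g
    obtain ⟨S, hSD, p, hp, h⟩ := this (mem_parabolic_inter hg hT) (T.finite_toSet.inter_of_right D)
    exact ⟨S, hSD.trans Set.inter_subset_left, p, parabolic_mono Set.inter_subset_left hp, h⟩
  let candidates : Set (Set V) := {S | S ⊆ D ∧ ∃ p ∈ parabolic D, p⁻¹ * g * p ∈ parabolic S}
  obtain ⟨S, ⟨⟨hSD, p, hp, hk⟩, hmin⟩⟩ := (hD.finite_subsets.subset fun _ h => h.1 :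
    candidates.Finite).exists_minimal ⟨D, subset_rfl, 1, one_mem _, by simpa using hg⟩
  refine ⟨S, hSD, p, hp, p⁻¹ * g * p, ⟨hk, fun r a ha hr => ?_⟩, by group⟩
  have hretract := retract_mem_inter (S := D) hr
  rw [map_mul, map_mul, map_inv, mem_parabolic_iff.1 (parabolic_mono hSD hk)] at hretract
  have hmem : S \ {a} ∈ candidates := by
    refine ⟨Set.sdiff_subset.trans hSD, p * (retract D r)⁻¹,
      mul_mem hp (inv_mem (retract_mem _ _)), parabolic_mono (Set.inter_subset_right (s := D)) ?_⟩
    convert hretract using 1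
    group
  exact (hmin hmem Set.sdiff_subset ha).2 rfl

theorem IsEssential.mem_of_commute (h : IsEssential S k) (hz : Commute z k) :
    z ∈ parabolic (S ∪ perp Γ S) := by
  refine mem_parabolic_of_forall fun t ht => ?_
  rw [Set.mem_union, not_or] at ht
  have hk : k ∈ parabolic ({t}ᶜ : Set V) := parabolic_mono (by grind) h.1
  refine (mem_parabolic_or_conj_mem_of_commute hk hz).resolve_right ?_
  rintro ⟨x, hx⟩
  have hSt : S ⊆ perp Γ {t} := h.subset_of_conj_mem (p := x⁻¹) (by simpa using hx)
  exact ht.2 (subset_perp_comm.1 hSt rfl)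

section Split

variable {A : Set V}

theorem IsEssential.eq_mul_of_sdiff_subset_perp (h : IsEssential S k) (hA : A ⊆ S)
    (hperp : S \ A ⊆ perp Γ A) : k = retract A k * retract (S \ A) k := by
  rw [← retract_union hperp, Set.union_sdiff_cancel hA, mem_parabolic_iff.1 h.1]

theorem IsEssential.retract_of_sdiff_subset_perp (h : IsEssential S k) (hA : A ⊆ S)
    (hperp : S \ A ⊆ perp Γ A) : IsEssential A (retract A k) := by
  refine ⟨retract_mem _ _, fun p a ha hp => ?_⟩
  set q := retract A p
  have hq : q * retract A k * q⁻¹ ∈ parabolic (A \ {a}) := by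
    have := retract_mem_inter (S := A) hp
    simp only [map_mul, map_inv, retract_retract, Set.inter_self] at this
    exact parabolic_mono Set.inter_subset_right this
  have hcomm : Commute q⁻¹ (retract (S \ A) k) :=
    commute_of_subset_perp hperp (inv_mem (retract_mem A p)) (retract_mem (S \ A) k)
  have hconj : q * k * q⁻¹ ∈ parabolic ((A \ {a}) ∪ (S \ A)) := by
    have : q * k * q⁻¹ = q * retract A k * q⁻¹ * retract (S \ A) k := by
      conv_lhs => rw [h.eq_mul_of_sdiff_subset_perp hA hperp]
      simp only [mul_assoc, hcomm.eq]
    rw [this]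
    exact mul_mem (parabolic_mono Set.subset_union_left hq)
      (parabolic_mono Set.subset_union_right (retract_mem _ _))
  grind [h.subset_of_conj_mem hconj (hA ha)]

theorem IsEssential.retract_mul_retract_perp (h : IsEssential S k) (hA : A ⊆ S)
    (hperp : S \ A ⊆ perp Γ A) (hz : Commute z k) : retract A z * retract (perp Γ A) z = z := by
  rw [← retract_union subset_rfl]
  refine mem_parabolic_iff.1 (parabolic_mono (Set.union_subset (fun s hs => ?_)
    ((perp_anti hA).trans Set.subset_union_right)) (h.mem_of_commute hz))
  exact or_iff_not_imp_left.2 fun hsA => hperp ⟨hs, hsA⟩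

theorem IsEssential.commute_retract (h : IsEssential S k) (hA : A ⊆ S)
    (hperp : S \ A ⊆ perp Γ A) (hz : Commute z k) : Commute z (retract A k) := by
  rw [← h.retract_mul_retract_perp hA hperp hz]
  exact (hz.map (retract A)).mul_left
    (commute_of_subset_perp subset_rfl (retract_mem _ _) (retract_mem _ _)).symm

theorem IsEssential.mem_perp_of_retract_eq_one (h : IsEssential S k) (hA : A ⊆ S)
    (hperp : S \ A ⊆ perp Γ A) (hz : Commute z k) (hz1 : retract A z = 1) :
    z ∈ parabolic (perp Γ A) := by
  rw [← h.retract_mul_retract_perp hA hperp hz, hz1, one_mul]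
  exact retract_mem _ _

end Split

theorem subset_or_subset_perp_of_connected (hC : (Γ.induce C).Connected)
    (h : C ⊆ S ∪ perp Γ S) : C ⊆ S ∨ C ⊆ perp Γ S := by
  by_contra! hne
  obtain ⟨⟨x, hxC, hxS⟩, y, hyC, hyS⟩ := And.intro (Set.not_subset.1 hne.1) (Set.not_subset.1 hne.2)
  obtain ⟨w⟩ := hC.preconnected ⟨y, hyC⟩ ⟨x, hxC⟩
  obtain ⟨d, -, hfst, hsnd⟩ := w.exists_boundary_dart {u | u.1 ∉ perp Γ S} hyS
    (by simpa using (h hxC).resolve_left hxS)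
  have hfstS : d.fst.1 ∈ S := (h d.fst.2).resolve_right hfst
  exact (not_not.1 hsnd _ hfstS).2 d.adj

theorem exists_connected_component (hS : S.Nonempty) :
    ∃ C ⊆ S, (Γ.induce C).Connected ∧ S \ C ⊆ perp Γ C := by
  obtain ⟨x, hx⟩ := hS
  let c := (Γ.induce S).connectedComponentMk ⟨x, hx⟩
  refine ⟨Subtype.val '' c.supp, Subtype.coe_image_subset _ _, ?_, ?_⟩
  · let toImage : (Γ.induce S).induce c.supp →g Γ.induce (Subtype.val '' c.supp) :=
      ⟨fun y => ⟨y.1.1, y.1, y.2, rfl⟩, id⟩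
    exact c.maximal_connected_induce_supp.prop.map toImage
      (by rintro ⟨_, y, hy, rfl⟩; exact ⟨⟨y, hy⟩, rfl⟩)
  · rintro y ⟨hyS, hyC⟩ _ ⟨s, hs, rfl⟩
    refine ⟨by rintro rfl; exact hyC ⟨s, hs, rfl⟩, fun hadj => hyC ⟨⟨y, hyS⟩, ?_, rfl⟩⟩
    exact c.mem_supp_of_adj_mem_supp hs hadj

/-- A conjugate of an element with connected essential support. Every element is a product of
commuting pure elements. -/
def IsPure (f : GG Γ) : Prop :=
  ∃ (p k : GG Γ) (C : Set V), f = p * k * p⁻¹ ∧ IsEssential C k ∧ (Γ.induce C).Connected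

theorem IsPure.conj {f : GG Γ} (hf : IsPure f) (g : GG Γ) : IsPure (g * f * g⁻¹) := by
  obtain ⟨p, k, C, rfl, hk, hC⟩ := hf
  exact ⟨g * p, k, C, by group, hk, hC⟩

theorem IsEssential.exists_pure_factors (hS : S.Finite) (hk : IsEssential S k) :
    ∃ X : List (GG Γ), k = X.prod ∧ (∀ f ∈ X, IsPure f) ∧
      ∀ z, Commute z k → ∀ f ∈ X, Commute z f := by
  induction hn : S.ncard using Nat.strong_induction_on generalizing S k with
  | _ n ih =>
    obtain rfl | hne := S.eq_empty_or_nonempty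
    · exact ⟨[], by simpa [parabolic_empty] using hk.1, by simp, by simp⟩
    obtain ⟨C, hCS, hC, hperp⟩ := exists_connected_component (Γ := Γ) hne
    have hperp' : S \ (S \ C) ⊆ perp Γ (S \ C) := by
      rw [Set.sdiff_sdiff_cancel_left hCS]
      exact subset_perp_comm.1 hperp
    have hlt : (S \ C).ncard < n := by
      obtain ⟨c, hc⟩ := Set.nonempty_coe_sort.1 hC.nonempty
      rw [← hn]
      exact Set.ncard_lt_ncard ⟨Set.sdiff_subset, fun h => (h (hCS hc)).2 hc⟩ hS
    obtain ⟨X, hprod, hpure, hcomm⟩ := ih _ hlt hS.sdiff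
      (hk.retract_of_sdiff_subset_perp Set.sdiff_subset hperp') rfl
    refine ⟨retract C k :: X, ?_, ?_, ?_⟩
    · rw [List.prod_cons, ← hprod]
      exact hk.eq_mul_of_sdiff_subset_perp hCS hperp
    · exact List.forall_mem_cons.2
        ⟨⟨1, _, C, by simp, hk.retract_of_sdiff_subset_perp hCS hperp, hC⟩, hpure⟩
    · exact fun z hz => List.forall_mem_cons.2 ⟨hk.commute_retract hCS hperp hz,
        hcomm z (hk.commute_retract Set.sdiff_subset hperp' hz)⟩

theorem exists_pure_factors (g : GG Γ) : ∃ X : List (GG Γ), g = X.prod ∧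
    (∀ f ∈ X, IsPure f) ∧ ∀ z, Commute z g → ∀ f ∈ X, Commute z f := by
  obtain ⟨D, hD⟩ := exists_finset_mem_parabolic g
  obtain ⟨S, hSD, p, -, k, hk, rfl⟩ := exists_isEssential_conj hD
  obtain ⟨X, rfl, hpure, hcomm⟩ := hk.exists_pure_factors (D.finite_toSet.subset hSD)
  refine ⟨X.map fun f => p * f * p⁻¹, map_list_prod (MulAut.conj p) X, ?_, ?_⟩
  · exact List.forall_mem_map.2 fun f hf => (hpure f hf).conj p
  · refine fun z hz => List.forall_mem_map.2 fun f hf => ?_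
    rw [commute_conj_right_iff] at hz ⊢
    exact hcomm _ hz f hf

end GG

/-! ### Axes of affine maps of a free group -/

theorem freeGroup_toWord_mk_of_le_norm {α : Type*} [DecidableEq α] {L : List (α × Bool)}
    (h : L.length ≤ (FreeGroup.mk L).norm) : (FreeGroup.mk L).toWord = L :=
  FreeGroup.toWord_mk.trans (FreeGroup.reduce.red.sublist.eq_of_length_le h)

section Axis

variable {α : Type*} {e : Equiv.Perm α} {f u : FreeGroup α} {O : Set (FreeGroup α)}
  {a : α × Bool} {l : List (α × Bool)}

/-- The element leading from `v` to its image under the affine map `v ↦ f * e v` of the free group,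
where `e` permutes the basis. -/
def displacement (e : Equiv.Perm α) (f v : FreeGroup α) : FreeGroup α :=
  v⁻¹ * f * FreeGroup.freeGroupCongr e v

theorem displacement_mul (v w : FreeGroup α) :
    displacement e f (v * w) = displacement e (displacement e f v) w := by
  simp [displacement, mul_assoc]

theorem mul_displacement_mul (v w : FreeGroup α) :
    v * (displacement e f v * FreeGroup.freeGroupCongr e w) =
      f * FreeGroup.freeGroupCongr e (v * w) := by
  simp only [displacement, map_mul]
  group

variable [DecidableEq α]

/-- `O` is invariant under the affine map `v ↦ f * e v` and contains the geodesic from `1` to its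
image `f`. -/
def ContainsAxis (e : Equiv.Perm α) (f : FreeGroup α) (O : Set (FreeGroup α)) : Prop :=
  (∀ v, f * FreeGroup.freeGroupCongr e v ∈ O ↔ v ∈ O) ∧
    ∀ L, L <+: f.toWord → FreeGroup.mk L ∈ O

theorem displacement_mk_of_head (hf : f.toWord = a :: l) :
    displacement e f (FreeGroup.mk [a]) = FreeGroup.mk (l ++ [(e a.1, a.2)]) := by
  have hsplit : f = FreeGroup.mk [a] * FreeGroup.mk l := by
    rw [FreeGroup.mul_mk, List.singleton_append, ← hf, FreeGroup.mk_toWord]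
  rw [displacement, hsplit, inv_mul_cancel_left, ← FreeGroup.mul_mk]
  rfl

theorem mul_map_of_last (hf : f.toWord = l ++ [(e a.1, !a.2)]) :
    f * FreeGroup.freeGroupCongr e (FreeGroup.mk [a]) = FreeGroup.mk l := by
  have hinv : FreeGroup.mk [(e a.1, !a.2)] = (FreeGroup.freeGroupCongr e (FreeGroup.mk [a]))⁻¹ :=
    rfl
  rw [← FreeGroup.mk_toWord (x := f), hf, ← FreeGroup.mul_mk, hinv, inv_mul_cancel_right]

theorem displacement_mk_of_last (hf : f.toWord = l ++ [(e a.1, !a.2)]) :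
    displacement e f (FreeGroup.mk [a]) = FreeGroup.mk ((a.1, !a.2) :: l) := by
  rw [displacement, mul_assoc, mul_map_of_last hf, FreeGroup.inv_mk, FreeGroup.mul_mk]
  rfl

theorem ContainsAxis.displacement_of_head (hO : ContainsAxis e f O) (hf : f.toWord = a :: l)
    (hle : f.norm ≤ (displacement e f (FreeGroup.mk [a])).norm) :
    ContainsAxis e (displacement e f (FreeGroup.mk [a])) {v | FreeGroup.mk [a] * v ∈ O} := by
  refine ⟨fun v => ?_, fun L hL => ?_⟩
  · rw [Set.mem_ofPred_eq, mul_displacement_mul, hO.1, Set.mem_ofPred_eq]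
  rw [displacement_mk_of_head hf] at hle hL
  rw [freeGroup_toWord_mk_of_le_norm (by simpa [FreeGroup.norm, hf] using hle),
    List.prefix_concat_iff] at hL
  obtain rfl | hL := hL
  · have himage : FreeGroup.mk [a] * FreeGroup.mk (l ++ [(e a.1, a.2)]) =
        f * FreeGroup.freeGroupCongr e (FreeGroup.mk [a]) := by
      rw [← displacement_mk_of_head hf, displacement, mul_assoc, mul_inv_cancel_left]
    rw [Set.mem_ofPred_eq, himage, hO.1]
    exact hO.2 _ (by simp [hf])
  · exact hO.2 (a :: L) (by simpa [hf] using hL)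

theorem ContainsAxis.displacement_of_last (hO : ContainsAxis e f O)
    (hf : f.toWord = l ++ [(e a.1, !a.2)])
    (hle : f.norm ≤ (displacement e f (FreeGroup.mk [a])).norm) :
    ContainsAxis e (displacement e f (FreeGroup.mk [a])) {v | FreeGroup.mk [a] * v ∈ O} := by
  refine ⟨fun v => ?_, fun L hL => ?_⟩
  · rw [Set.mem_ofPred_eq, mul_displacement_mul, hO.1, Set.mem_ofPred_eq]
  rw [displacement_mk_of_last hf] at hle hL
  rw [freeGroup_toWord_mk_of_le_norm (by simpa [FreeGroup.norm, hf] using hle),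
    List.prefix_cons_iff] at hL
  obtain rfl | ⟨M, rfl, hM⟩ := hL
  · rw [Set.mem_ofPred_eq, ← FreeGroup.one_eq_mk, mul_one, ← hO.1, mul_map_of_last hf]
    exact hO.2 _ (by simp [hf])
  · have hcancel : FreeGroup.mk [a] * FreeGroup.mk ((a.1, !a.2) :: M) = FreeGroup.mk M := by
      rw [← List.singleton_append, ← FreeGroup.mul_mk]
      exact mul_inv_cancel_left (FreeGroup.mk [a]) (FreeGroup.mk M)
    rw [Set.mem_ofPred_eq, hcancel]
    exact hO.2 _ (hf ▸ hM.trans (List.prefix_append _ _))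

theorem norm_lt_norm_displacement (hu : u.toWord = a :: l) (hf : f ≠ 1)
    (hhead : a ∉ f.toWord.head?) (hlast : (e a.1, !a.2) ∉ f.toWord.getLast?) :
    f.norm < (displacement e f u).norm := by
  have hinv : (u⁻¹).toWord = FreeGroup.invRev l ++ [(a.1, !a.2)] := by
    simp [FreeGroup.toWord_inv, hu, FreeGroup.invRev]
  have himage : (FreeGroup.freeGroupCongr e u).toWord =
      (e a.1, a.2) :: l.map fun p => (e p.1, p.2) := by
    rw [show FreeGroup.freeGroupCongr e u = FreeGroup.map e u from rfl,
      freeGroup_toWord_map e.injective, hu, List.map_cons]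
  have hreduced : FreeGroup.IsReduced
      ((u⁻¹).toWord ++ f.toWord ++ (FreeGroup.freeGroupCongr e u).toWord) := by
    refine FreeGroup.IsReduced.append_overlap ?_ ?_ (mt FreeGroup.toWord_eq_nil_iff.1 hf)
    · refine List.isChain_append.2 ⟨FreeGroup.isReduced_toWord, FreeGroup.isReduced_toWord, ?_⟩
      simp only [hinv, List.getLast?_concat, Option.mem_some_iff, forall_eq']
      intro b hb hfst
      by_contra hne
      exact hhead ((Prod.ext hfst (by simpa using hne) : a = b) ▸ hb)
    · refine List.isChain_append.2 ⟨FreeGroup.isReduced_toWord, FreeGroup.isReduced_toWord, ?_⟩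
      simp only [himage, List.head?_cons, Option.mem_some_iff, forall_eq']
      intro b hb hfst
      by_contra hne
      exact hlast ((Prod.ext hfst (Bool.eq_not.2 hne) : b = (e a.1, !a.2)) ▸ hb)
  have hword : displacement e f u =
      FreeGroup.mk ((u⁻¹).toWord ++ f.toWord ++ (FreeGroup.freeGroupCongr e u).toWord) := by
    simp only [← FreeGroup.mul_mk, FreeGroup.mk_toWord, displacement]
  have hlength := congrArg List.length hreduced.reduce_eq
  rw [← FreeGroup.toWord_mk, ← hword, hinv] at hlength
  simp only [FreeGroup.norm, hlength, List.length_append, List.length_singleton]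
  lia

/-- The points of minimal displacement form the axis: walk from `1` to `u`; the first letter must
point along the axis, in one of its two directions. -/
theorem ContainsAxis.mem (hO : ContainsAxis e f O)
    (hmin : ∀ v, f.norm ≤ (displacement e f v).norm) (hf : f ≠ 1)
    (hu : (displacement e f u).norm = f.norm) : u ∈ O := by
  induction hn : u.toWord generalizing u f O with
  | nil =>
    rw [FreeGroup.toWord_eq_nil_iff.1 hn, FreeGroup.one_eq_mk]
    exact hO.2 [] List.nil_prefix
  | cons a w ih =>
    have hu' : FreeGroup.mk [a] * FreeGroup.mk w = u := by
      rw [FreeGroup.mul_mk, ← FreeGroup.mk_toWord (x := u), hn]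
      rfl
    have hw : (FreeGroup.mk w).toWord = w := FreeGroup.toWord_mk.trans
      (FreeGroup.isReduced_toWord.infix (hn ▸ (List.suffix_cons a w).isInfix)).reduce_eq
    suffices ContainsAxis e (displacement e f (FreeGroup.mk [a])) {v | FreeGroup.mk [a] * v ∈ O} ∧
        (displacement e f (FreeGroup.mk [a])).norm ≤ f.norm by
      obtain ⟨haxis, hle⟩ := this
      have heq := hle.antisymm (hmin _)
      rw [← hu']
      refine ih (O := {v | FreeGroup.mk [a] * v ∈ O}) haxis (fun v => ?_) (fun h => ?_) ?_ hw
      · rw [heq, ← displacement_mul]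
        exact hmin _
      · rw [h, FreeGroup.norm_one] at heq
        exact hf (FreeGroup.norm_eq_zero.1 heq.symm)
      · rw [heq, ← displacement_mul, hu', hu]
    by_cases hhead : a ∈ f.toWord.head?
    · obtain ⟨l, hl⟩ := List.head?_eq_some_iff.1 hhead
      refine ⟨hO.displacement_of_head hl (hmin _), ?_⟩
      rw [displacement_mk_of_head hl]
      exact FreeGroup.norm_mk_le.trans_eq (by simp [FreeGroup.norm, hl])
    by_cases hlast : (e a.1, !a.2) ∈ f.toWord.getLast?
    · obtain ⟨l, hl⟩ := List.getLast?_eq_some_iff.1 hlast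
      refine ⟨hO.displacement_of_last hl (hmin _), ?_⟩
      rw [displacement_mk_of_last hl]
      exact FreeGroup.norm_mk_le.trans_eq (by simp [FreeGroup.norm, hl])
    · exact absurd hu (norm_lt_norm_displacement hn hf hhead hlast).ne'

end Axis

/-! ### Centralizers of essential elements -/

open scoped commutatorElement in
theorem commute_of_finiteIndex_center {G : Type*} [Group G] [(Subgroup.center G).FiniteIndex]
    (hG : ∀ (g : G) (n : ℕ), n ≠ 0 → g ^ n = 1 → g = 1) (a b : G) : Commute a b := by
  have htransfer : MonoidHom.transferCenterPow G ⁅a, b⁆ = 1 := by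
    rw [map_commutatorElement, commutatorElement_eq_one_iff_mul_comm]
    exact mul_comm' _ _
  have hpow : ⁅a, b⁆ ^ (Subgroup.center G).index = 1 := by
    rw [← MonoidHom.transferCenterPow_apply, htransfer, Subgroup.coe_one]
  exact commutatorElement_eq_one_iff_commute.1
    (hG _ _ Subgroup.FiniteIndex.index_ne_zero hpow)

namespace GG

variable {V : Type} {Γ : SimpleGraph V} {t : V} {C : Set V} {k y : GG Γ}

theorem conj_freeEval_mem_of_treeAct_eq_self {v : FreeGroup (LinkCoset Γ t)}
    (h : treeAct t k v = v) :
    (freeEval t v)⁻¹ * k * freeEval t v ∈ parabolic ({t}ᶜ : Set V) := by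
  have hfix := congrArg (freeEval t) h
  rw [treeAct, map_mul, freeEval_cosetAut] at hfix
  have : (freeEval t v)⁻¹ * k * freeEval t v = retract ({t}ᶜ : Set V) k := by
    conv_lhs => rw [← freeEval_mul_retract t k]
    nth_rw 1 [← hfix]
    group
  exact this ▸ retract_mem _ _

theorem treeAct_mul_right (t : V) (g : GG Γ) (v w : FreeGroup (LinkCoset Γ t)) :
    treeAct t g (v * w) = treeAct t g v * cosetAut t (retract ({t}ᶜ : Set V) g) w := by
  simp [treeAct, mul_assoc]

theorem norm_inv_mul_treeAct [DecidableEq (LinkCoset Γ t)] (g : GG Γ)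
    (v w : FreeGroup (LinkCoset Γ t)) :
    ((treeAct t g v)⁻¹ * treeAct t g w).norm = (v⁻¹ * w).norm := by
  rw [← norm_cosetAut (retract ({t}ᶜ : Set V) g) (v⁻¹ * w)]
  simp only [treeAct, map_mul, map_inv]
  group

/-- A hyperbolic `k` acts cocompactly on its axis, which everything that commutes with `k`
preserves. -/
theorem exists_finite_zpow_treeAct (hk : ∀ v, treeAct t k v ≠ v) :
    ∃ (v₀ : FreeGroup (LinkCoset Γ t)) (E : Set (FreeGroup (LinkCoset Γ t))), E.Finite ∧
      ∀ y, Commute y k → ∃ n : ℤ, ∃ x ∈ E, treeAct t y v₀ = treeAct t (k ^ n) x := by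
  classical
  let d : FreeGroup (LinkCoset Γ t) → ℕ := fun v => (v⁻¹ * treeAct t k v).norm
  let v₀ := Function.argmin d
  let e : Equiv.Perm (LinkCoset Γ t) := MulAction.toPerm (retract ({t}ᶜ : Set V) k)
  set f := v₀⁻¹ * treeAct t k v₀
  have hdisp : ∀ u, (displacement e f u).norm = d (v₀ * u) := by
    intro u
    simp only [d, treeAct_mul_right, displacement, mul_inv_rev, mul_assoc, f]
    rfl
  let E : Set (FreeGroup (LinkCoset Γ t)) :=
    (fun L => v₀ * FreeGroup.mk L) '' {L | L <+: f.toWord}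
  let O : Set (FreeGroup (LinkCoset Γ t)) :=
    {u | ∃ n : ℤ, ∃ x ∈ E, v₀ * u = treeAct t (k ^ n) x}
  have hO : ContainsAxis e f O := by
    refine ⟨fun u => ?_, fun L hL => ⟨0, _, ⟨L, hL, rfl⟩, by simp [treeAct_one]⟩⟩
    have himage : v₀ * (f * FreeGroup.freeGroupCongr e u) = treeAct t k (v₀ * u) := by
      simp only [f, treeAct_mul_right, mul_assoc, mul_inv_cancel_left]
      rfl
    constructor
    · rintro ⟨n, x, hx, h⟩
      refine ⟨-1 + n, x, hx, ?_⟩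
      rw [zpow_add, treeAct_mul, ← h, himage, ← treeAct_mul, zpow_neg_one, inv_mul_cancel,
        treeAct_one]
    · rintro ⟨n, x, hx, h⟩
      exact ⟨1 + n, x, hx, by rw [himage, h, zpow_add, treeAct_mul, zpow_one]⟩
  refine ⟨v₀, E, (List.finite_toSet f.toWord.inits).subset (fun L hL => ?_) |>.image _,
    fun y hy => ?_⟩
  · exact (List.mem_inits _ _).2 hL
  have hmem : v₀⁻¹ * treeAct t y v₀ ∈ O := by
    refine hO.mem (fun v => ?_) (fun h => hk v₀ (inv_mul_eq_one.1 h).symm) ?_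
    · rw [hdisp]
      exact Function.argmin_le d _
    · rw [hdisp, mul_inv_cancel_left]
      simp only [d]
      rw [← treeAct_mul, ← hy.eq, treeAct_mul, norm_inv_mul_treeAct]
  simpa [O] using hmem

theorem IsEssential.eq_one_of_treeAct_eq_self (hk : IsEssential C k)
    (hC : (Γ.induce C).Connected) (hy : y ∈ parabolic C) (hyk : Commute y k) (ht : t ∈ C)
    {v : FreeGroup (LinkCoset Γ t)} (hv : treeAct t y v = v) : y = 1 := by
  obtain ⟨S, hSC, p, -, k', hk', rfl⟩ := exists_isEssential_conj hy
  have hcover : C ⊆ S ∪ perp Γ S := hk.subset_of_conj_mem (p := p⁻¹)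
    (by simpa using hk'.mem_of_commute (commute_conj_right_iff.1 hyk.symm))
  obtain hCS | hCS := subset_or_subset_perp_of_connected hC hcover
  · have := hk'.subset_of_conj_mem (p := (freeEval t v)⁻¹ * p) (T := {t}ᶜ)
      (by simpa [mul_assoc] using conj_freeEval_mem_of_treeAct_eq_self hv)
    exact absurd rfl (this (hCS ht))
  · have hS : S = ∅ := Set.eq_empty_of_forall_notMem fun s hs =>
      notMem_perp_of_mem hs (hCS (hSC hs))
    have hk'1 : k' = 1 := by simpa [hS, parabolic_empty] using hk'.1
    simp [hk'1]

theorem IsEssential.relIndex_zpowers_ne_zero (hk : IsEssential C k)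
    (hC : (Γ.induce C).Connected) :
    (Subgroup.zpowers k).relIndex (parabolic C ⊓ Subgroup.centralizer {k}) ≠ 0 := by
  set H : Subgroup (GG Γ) := parabolic C ⊓ Subgroup.centralizer {k}
  have hcomm : ∀ z : H, Commute (z : GG Γ) k := fun z =>
    Subgroup.mem_centralizer_singleton_iff.1 z.2.2
  obtain ⟨t, ht⟩ := Set.nonempty_coe_sort.1 hC.nonempty
  have hfree : ∀ v, treeAct t k v ≠ v := fun v hv =>
    hk.ne_one ⟨t, ht⟩ (hk.eq_one_of_treeAct_eq_self hC hk.1 (Commute.refl _) ht hv)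
  obtain ⟨v₀, E, hE, h⟩ := exists_finite_zpow_treeAct hfree
  choose n x hx hn using fun z : H => h z (hcomm z)
  have hcoset : ∀ z w : H, x z = x w → z⁻¹ * w ∈ (Subgroup.zpowers k).subgroupOf H := by
    intro z w hzw
    have hfix : treeAct t ((z : GG Γ)⁻¹ * (k ^ (n z - n w) * (w : GG Γ))) v₀ = v₀ := by
      rw [treeAct_mul, treeAct_mul, hn w, ← hzw, ← treeAct_mul t (k ^ (n z - n w)), ← zpow_add,
        sub_add_cancel, ← hn z, ← treeAct_mul, inv_mul_cancel, treeAct_one]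
    have hone := hk.eq_one_of_treeAct_eq_self hC
      (mul_mem (inv_mem z.2.1) (mul_mem (zpow_mem hk.1 _) w.2.1))
      ((hcomm z).inv_left.mul_left (((Commute.refl k).zpow_left _).mul_left (hcomm w))) ht hfix
    rw [← mul_assoc, ((hcomm z).inv_left.zpow_right _).eq, mul_assoc] at hone
    exact Subgroup.mem_subgroupOf.2
      ⟨-(n z - n w), (zpow_neg k _).trans (eq_inv_of_mul_eq_one_right hone).symm⟩
  have := hE.to_subtype
  have : Finite (H ⧸ (Subgroup.zpowers k).subgroupOf H) :=
    Finite.of_injective (fun q => (⟨x q.out, hx q.out⟩ : E)) fun q r hqr => by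
      rw [← q.out_eq', ← r.out_eq']
      exact QuotientGroup.eq.2 (hcoset _ _ (congrArg Subtype.val hqr))
  exact Subgroup.index_ne_zero_of_finite

theorem IsEssential.exists_pow_eq_zpow (hk : IsEssential C k) (hC : (Γ.induce C).Connected)
    (hy : y ∈ parabolic C) (hyk : Commute y k) : ∃ (m : ℕ) (l : ℤ), m ≠ 0 ∧ y ^ m = k ^ l := by
  obtain ⟨m, hm, -, ⟨l, hl⟩, -⟩ := Subgroup.exists_pow_mem_of_relIndex_ne_zero
    (hk.relIndex_zpowers_ne_zero hC) ⟨hy, Subgroup.mem_centralizer_singleton_iff.2 hyk.eq⟩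
  exact ⟨m, l, hm.ne', hl.symm⟩

theorem IsEssential.commute_of_commute (hk : IsEssential C k) (hC : (Γ.induce C).Connected)
    {y' : GG Γ} (hy : y ∈ parabolic C) (hyk : Commute y k) (hy' : y' ∈ parabolic C)
    (hyk' : Commute y' k) : Commute y y' := by
  set H : Subgroup (GG Γ) := parabolic C ⊓ Subgroup.centralizer {k}
  have hle : (Subgroup.zpowers k).subgroupOf H ≤ Subgroup.center H := by
    rintro ⟨_, hz⟩ ⟨n, rfl⟩
    refine Subgroup.mem_center_iff.2 fun w => Subtype.ext ?_
    exact (show Commute (w : GG Γ) k from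
      Subgroup.mem_centralizer_singleton_iff.1 w.2.2).zpow_right n
  have : ((Subgroup.zpowers k).subgroupOf H).FiniteIndex := ⟨hk.relIndex_zpowers_ne_zero hC⟩
  have := Subgroup.finiteIndex_of_le hle
  exact congrArg Subtype.val <| commute_of_finiteIndex_center
    (fun g n hn hg => Subtype.ext (eq_one_of_pow_eq_one hn (congrArg Subtype.val hg)))
    (⟨y, hy, Subgroup.mem_centralizer_singleton_iff.2 hyk.eq⟩ : H)
    ⟨y', hy', Subgroup.mem_centralizer_singleton_iff.2 hyk'.eq⟩

end GG

namespace GG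

variable {V : Type} {Γ : SimpleGraph V} {I : Set V} {t : V} {x w z : GG Γ}

/-- The vertices avoided by all conjugates of `x` form a union of components of `I`: if `s` is
avoided and `r` is adjacent to `s`, compare the conjugates of `x` by `g` and `of s * g`. -/
theorem eq_one_of_forall_conj_mem (hI : (Γ.induce I).Connected) (ht : t ∈ I) (hx : x ∈ parabolic I)
    (h : ∀ g ∈ parabolic I, g * x * g⁻¹ ∈ parabolic ({t}ᶜ : Set V)) : x = 1 := by
  let T : Set V := {s | s ∈ I ∧ ∀ g ∈ parabolic I, g * x * g⁻¹ ∈ parabolic ({s}ᶜ : Set V)}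
  have hcover : I ⊆ T ∪ perp Γ T := by
    refine fun r hr => or_iff_not_imp_left.2 fun hrT s hs => ⟨?_, fun hadj => hrT ⟨hr, ?_⟩⟩
    · rintro rfl
      exact hrT hs
    intro g hg
    have hconj := hs.2 (of s * g) (mul_mem (of_mem_parabolic hs.1) hg)
    have hcomm : Commute (g * x * g⁻¹) (of s) := by
      rw [show of s * g * x * (of s * g)⁻¹ = of s * (g * x * g⁻¹) * (of s)⁻¹ by group,
        mem_parabolic_iff, map_mul, map_mul, map_inv, mem_parabolic_iff.1 (hs.2 g hg),
        retract_of_notMem (by simp), one_mul, inv_one, mul_one, eq_mul_inv_iff_mul_eq] at hconj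
      exact hconj
    refine parabolic_mono ?_ (mem_parabolic_perp_of_commute (hs.2 g hg) hcomm)
    rintro _ hy rfl
    exact (mem_perp_singleton.1 hy).2 hadj
  have hIT : I ⊆ T := (subset_or_subset_perp_of_connected hI hcover).resolve_right
    fun hperp => notMem_perp_of_mem (show t ∈ T from ⟨ht, h⟩) (hperp ht)
  suffices x ∈ parabolic ∅ by simpa [parabolic_empty] using this
  refine mem_parabolic_of_forall fun s _ => ?_
  by_cases hs : s ∈ I
  · simpa using (hIT hs).2 1 (one_mem _)
  · exact parabolic_mono (Set.subset_compl_singleton_iff.2 hs) hx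

theorem exists_pow_eq_zpow_of_commute_conj (hI : (Γ.induce I).Connected) (hx : x ∈ parabolic I)
    (hw : w ∈ parabolic I) (hx1 : x ≠ 1) (hw1 : w ≠ 1)
    (h : ∀ g ∈ parabolic I, Commute (g * x * g⁻¹) w) :
    ∃ (m : ℕ) (l : ℤ), m ≠ 0 ∧ x ^ m = w ^ l := by
  obtain ⟨S, hSI, p, hp, k, hk, rfl⟩ := exists_isEssential_conj hw
  have hcomm : ∀ g ∈ parabolic I, Commute (g * x * g⁻¹) k := by
    intro g hg
    convert commute_conj_right_iff.1 (h (p * g) (mul_mem hp hg)) using 1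
    group
  have hcover : I ⊆ S ∪ perp Γ S := by
    intro t ht
    by_contra hts
    exact hx1 <| eq_one_of_forall_conj_mem hI ht hx fun g hg =>
      parabolic_mono (Set.subset_compl_singleton_iff.2 hts) (hk.mem_of_commute (hcomm g hg))
  have hIS : I ⊆ S := (subset_or_subset_perp_of_connected hI hcover).resolve_right fun hperp => by
    have hS : S = ∅ := Set.eq_empty_of_forall_notMem fun s hs =>
      notMem_perp_of_mem hs (hperp (hSI hs))
    have hk1 : k = 1 := by simpa [hS, parabolic_empty] using hk.1
    simp [hk1] at hw1
  obtain rfl := hIS.antisymm hSI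
  obtain ⟨m, l, hm, hml⟩ := hk.exists_pow_eq_zpow hI
    (mul_mem (mul_mem (inv_mem hp) hx) (inv_mem (inv_mem hp))) (hcomm _ (inv_mem hp))
  refine ⟨m, l, hm, ?_⟩
  rw [conj_zpow, ← hml, conj_pow]
  group

theorem eq_one_of_forall_commute (hI : (Γ.induce I).Connected) (hnt : I.Nontrivial)
    (hz : z ∈ parabolic I) (h : ∀ g ∈ parabolic I, Commute g z) : z = 1 := by
  obtain ⟨a, ha, b, hb, hab⟩ := hnt
  by_contra hz1
  have hpow : ∀ v ∈ I, ∃ (m : ℕ) (l : ℤ), m ≠ 0 ∧ (of v : GG Γ) ^ m = z ^ l := fun v hv =>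
    exists_pow_eq_zpow_of_commute_conj hI (of_mem_parabolic hv) hz (of_ne_one v) hz1 fun g hg =>
      h _ (mul_mem (mul_mem hg (of_mem_parabolic hv)) (inv_mem hg))
  obtain ⟨⟨m, l, hm, hml⟩, ⟨m', l', hm', hml'⟩⟩ := And.intro (hpow a ha) (hpow b hb)
  have hl' : l' ≠ 0 := by
    rintro rfl
    exact of_ne_one b (eq_one_of_pow_eq_one hm' (by simpa using hml'))
  have hcommon : (of a : GG Γ) ^ ((m : ℤ) * l') = of b ^ ((m' : ℤ) * l) := by
    rw [zpow_mul, zpow_mul, zpow_natCast, zpow_natCast, hml, hml', ← zpow_mul, ← zpow_mul,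
      mul_comm]
  have hretract := congrArg (retract {a}) hcommon
  rw [map_zpow, map_zpow, retract_of_mem (Set.mem_singleton a),
    retract_of_notMem (S := {a}) (v := b) (by simpa using hab.symm), one_zpow] at hretract
  exact of_ne_one a (eq_one_of_zpow_eq_one (mul_ne_zero (by exact_mod_cast hm) hl') hretract)

open scoped commutatorElement in
/-- Commutators of conjugates collect the kernels one by one; a commutator can only vanish when the
two elements have a common power. -/
theorem exists_ne_one_forall_map_eq_one (hI : (Γ.induce I).Connected) {ι H : Type*} [Group H]
    (ψ : ι → (GG Γ →* H)) (s : Finset ι) : ∃ w ∈ parabolic I, w ≠ 1 ∧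
      ∀ i ∈ s, (∃ x ∈ parabolic I, x ≠ 1 ∧ ψ i x = 1) → ψ i w = 1 := by
  classical
  induction s using Finset.induction_on with
  | empty =>
    obtain ⟨a, ha⟩ := Set.nonempty_coe_sort.1 hI.nonempty
    exact ⟨of a, of_mem_parabolic ha, of_ne_one a, by simp⟩
  | insert j s _ ih =>
    obtain ⟨w, hw, hw1, hws⟩ := ih
    simp only [Finset.forall_mem_insert]
    by_cases hker : ∃ x ∈ parabolic I, x ≠ 1 ∧ ψ j x = 1
    swap
    · exact ⟨w, hw, hw1, fun h => absurd h hker, hws⟩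
    obtain ⟨x, hx, hx1, hxj⟩ := hker
    by_cases hc : ∀ g ∈ parabolic I, Commute (g * x * g⁻¹) w
    · obtain ⟨m, l, hm, hml⟩ := exists_pow_eq_zpow_of_commute_conj hI hx hw hx1 hw1 hc
      refine ⟨x ^ m, pow_mem hx _, fun h => hx1 (eq_one_of_pow_eq_one hm h), fun _ => ?_,
        fun i hi h => ?_⟩
      · rw [map_pow, hxj, one_pow]
      · rw [hml, map_zpow, hws i hi h, one_zpow]
    · push Not at hc
      obtain ⟨g, hg, hgc⟩ := hc
      have hconj : g * x * g⁻¹ ∈ parabolic I := mul_mem (mul_mem hg hx) (inv_mem hg)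
      refine ⟨⁅g * x * g⁻¹, w⁆, ?_, mt commutatorElement_eq_one_iff_commute.1 hgc,
        fun _ => by simp [map_commutatorElement, hxj],
        fun i hi h => by simp [map_commutatorElement, hws i hi h]⟩
      rw [commutatorElement_def]
      exact mul_mem (mul_mem (mul_mem hconj hw) (inv_mem hconj)) (inv_mem hw)

end GG

/-! ### Separating the components of the source graph -/

namespace GG

variable {V W : Type} {Λ : SimpleGraph V} {Γ : SimpleGraph W} {φ : GG Λ →* GG Γ} {I U : Set V}
  {C D : Set W} {u : V} {x y w : GG Λ}

/-- `φ` restricts to an injective homomorphism from `parabolic U` into `parabolic D`. -/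
structure EmbedsParabolic (φ : GG Λ →* GG Γ) (U : Set V) (D : Set W) : Prop where
  map_mem : ∀ x ∈ parabolic U, φ x ∈ parabolic D
  eq_one : ∀ x ∈ parabolic U, φ x = 1 → x = 1

theorem EmbedsParabolic.mono (h : EmbedsParabolic φ U D) (hIU : I ⊆ U) : EmbedsParabolic φ I D :=
  ⟨fun x hx => h.map_mem x (parabolic_mono hIU hx), fun x hx => h.eq_one x (parabolic_mono hIU hx)⟩

theorem EmbedsParabolic.exists_conj_isEssential (h : EmbedsParabolic φ U D) (hw : w ∈ parabolic U)
    (hw1 : w ≠ 1) : ∃ ψ : GG Λ →* GG Γ, EmbedsParabolic ψ U D ∧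
      (∀ C x, retract C (ψ x) = 1 ↔ retract C (φ x) = 1) ∧
      ∃ S ⊆ D, S.Nonempty ∧ IsEssential S (ψ w) := by
  obtain ⟨S, hSD, p, hp, k, hk, hφw⟩ := exists_isEssential_conj (h.map_mem w hw)
  let ψ := (MulAut.conj p⁻¹).toMonoidHom.comp φ
  have hψ : ∀ x, ψ x = p⁻¹ * φ x * p⁻¹⁻¹ := fun _ => rfl
  refine ⟨ψ, ⟨fun x hx => ?_, fun x hx h1 => ?_⟩, fun C x => ?_, S, hSD, ?_, ?_⟩
  · exact mul_mem (mul_mem (inv_mem hp) (h.map_mem x hx)) (inv_mem (inv_mem hp))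
  · exact h.eq_one x hx (conj_eq_one_iff.1 ((hψ x).symm.trans h1))
  · rw [hψ, map_mul, map_mul, map_inv _ p⁻¹, conj_eq_one_iff]
  · rw [Set.nonempty_iff_ne_empty]
    rintro rfl
    have hk1 : k = 1 := by simpa [parabolic_empty] using hk.1
    exact hw1 (h.eq_one w hw (by simp [hφw, hk1]))
  · rwa [hψ, hφw, show p⁻¹ * (p * k * p⁻¹) * p⁻¹⁻¹ = k by group]

/-- Some power of `φ y` is the image of a power of `w`, which must be central in `parabolic I`. -/
theorem EmbedsParabolic.map_eq_one_of_commute (h : EmbedsParabolic φ I C)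
    (hI : (Λ.induce I).Connected) (hnt : I.Nontrivial) (hC : (Γ.induce C).Connected)
    (hw : w ∈ parabolic I) (hφw : IsEssential C (φ w)) (hyC : φ y ∈ parabolic C)
    (hy : ∀ g ∈ parabolic I, Commute g y) : φ y = 1 := by
  obtain ⟨m, l, hm, hml⟩ := hφw.exists_pow_eq_zpow hC hyC ((hy w hw).symm.map φ)
  have hcentral : ∀ g ∈ parabolic I, Commute g (w ^ l) := by
    intro g hg
    have hwl : w ^ l ∈ parabolic I := zpow_mem hw l
    have hcomm : Commute (φ g) (φ (w ^ l)) := by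
      rw [map_zpow, ← hml]
      exact ((hy g hg).map φ).pow_right m
    refine mul_inv_eq_iff_eq_mul.1 (mul_inv_eq_one.1 (h.eq_one (g * w ^ l * g⁻¹ * (w ^ l)⁻¹)
      (mul_mem (mul_mem (mul_mem hg hwl) (inv_mem hg)) (inv_mem hwl)) ?_))
    rw [map_mul, map_mul, map_mul, map_inv, map_inv, hcomm.eq]
    group
  refine eq_one_of_pow_eq_one hm ?_
  rw [hml, ← map_zpow, eq_one_of_forall_commute hI hnt (zpow_mem hw l) hcentral, map_one]

theorem EmbedsParabolic.exists_separation (h : EmbedsParabolic φ (I ∪ U) D) (hD : D.Finite)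
    (hI : (Λ.induce I).Connected) (hnt : I.Nontrivial) (hU : U ⊆ perp Λ I) :
    ∃ ψ : GG Λ →* GG Γ, ∃ C ⊆ D, (Γ.induce C).Connected ∧
      EmbedsParabolic ((retract C).comp ψ) I C ∧ EmbedsParabolic ψ U (D ∩ perp Γ C) := by
  obtain ⟨w, hw, hw1, hker⟩ := exists_ne_one_forall_map_eq_one hI
    (fun C : Set W => (retract C).comp φ) hD.finite_subsets.toFinset
  obtain ⟨ψ, hψ, hretract, S, hSD, hS, hk⟩ :=
    h.exists_conj_isEssential (parabolic_mono Set.subset_union_left hw) hw1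
  obtain ⟨C, hCS, hC, hperp⟩ := exists_connected_component (Γ := Γ) hS
  have hkC := hk.retract_of_sdiff_subset_perp hCS hperp
  have hψC : EmbedsParabolic ((retract C).comp ψ) I C := by
    refine ⟨fun _ _ => retract_mem _ _, fun x hx hx1 => ?_⟩
    by_contra hne
    refine hkC.ne_one (Set.nonempty_coe_sort.1 hC.nonempty) ((hretract C w).2 ?_)
    exact hker C (by simpa using hCS.trans hSD) ⟨x, hx, hne, (hretract C x).1 hx1⟩
  refine ⟨ψ, C, hCS.trans hSD, hC, hψC, fun y hy => ?_, (hψ.mono Set.subset_union_right).eq_one⟩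
  have hcomm : ∀ g ∈ parabolic I, Commute g y := fun g hg => commute_of_subset_perp hU hg hy
  exact mem_parabolic_inter (hψ.map_mem y (parabolic_mono Set.subset_union_right hy)) <|
    hk.mem_perp_of_retract_eq_one hCS hperp ((hcomm w hw).symm.map ψ)
      (hψC.map_eq_one_of_commute hI hnt hC hw hkC (retract_mem _ _) hcomm)

open scoped Classical in
theorem isIndContained_induce_union (hI : Λ.induce I ⊴ Γ.induce C)
    (hU : Λ.induce U ⊴ Γ.induce (D ∩ perp Γ C)) (hCD : C ⊆ D) (hperp : U ⊆ perp Λ I) :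
    Λ.induce (I ∪ U) ⊴ Γ.induce D := by
  obtain ⟨⟨f⟩, ⟨g⟩⟩ := And.intro hI hU
  have hsum : ∀ v : (I ∪ U : Set V), v.1 ∉ I → v.1 ∈ U := fun v => v.2.resolve_left
  let F : (I ∪ U : Set V) → D := fun v =>
    if h : v.1 ∈ I then ⟨f ⟨v, h⟩, hCD (f ⟨v, h⟩).2⟩ else ⟨g ⟨v, hsum v h⟩, (g ⟨v, hsum v h⟩).2.1⟩
  have hFI : ∀ v (h : v.1 ∈ I), (F v).1 = f ⟨v, h⟩ := fun v h => by simp only [F, dif_pos h]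
  have hFU : ∀ v (h : v.1 ∉ I), (F v).1 = g ⟨v, hsum v h⟩ := fun v h => by simp only [F, dif_neg h]
  have hF : ∀ v w, (F v = F w → v = w) ∧ (Γ.Adj (F v) (F w) ↔ Λ.Adj v w) := by
    intro v w
    rw [← Subtype.coe_inj (a := F v), ← Subtype.coe_inj (a := v)]
    wlog hvw : v.1 ∈ I ∨ w.1 ∉ I generalizing v w
    · rw [eq_comm, eq_comm (a := v.1), Γ.adj_comm, Λ.adj_comm]
      exact this w v (by tauto)
    by_cases hv : v.1 ∈ I <;> by_cases hw : w.1 ∈ I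
    · rw [hFI v hv, hFI w hw, Subtype.coe_inj, f.injective.eq_iff]
      exact ⟨congrArg Subtype.val, f.map_rel_iff⟩
    · rw [hFI v hv, hFU w hw]
      have hΛ := hperp (hsum w hw) v hv
      have hΓ := (g ⟨w, hsum w hw⟩).2.2 _ (f ⟨v, hv⟩).2
      exact ⟨fun h => absurd h hΓ.1, iff_of_false hΓ.2 hΛ.2⟩
    · exact absurd hw (hvw.resolve_left hv)
    · rw [hFU v hv, hFU w hw, Subtype.coe_inj, g.injective.eq_iff]
      exact ⟨congrArg Subtype.val, g.map_rel_iff⟩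
  exact ⟨⟨⟨F, fun v w => (hF v w).1⟩, fun {v w} => (hF v w).2⟩⟩

theorem commute_of_isIndepSet (hU : Λ.IsIndepSet U) (hx : x ∈ parabolic U)
    (hy : y ∈ parabolic U) : Commute x y := by
  refine (commute_of_forall_commute (fun v hv => ?_) hy)
  refine (commute_of_forall_commute (fun u hu => ?_) hx).symm
  exact commute_of fun hadj => hU hv hu hadj.ne hadj

theorem eq_one_of_isIndepSet (hU : Λ.IsIndepSet U) (hx : x ∈ parabolic U)
    (h : ∀ t ∈ U, retract {t} x = 1) : x = 1 := by
  suffices x ∈ parabolic ∅ by simpa [parabolic_empty] using this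
  refine mem_parabolic_of_forall fun t _ => ?_
  by_cases ht : t ∈ U
  · have hperp : U \ {t} ⊆ perp Λ {t} := fun s hs =>
      mem_perp_singleton.2 ⟨Ne.symm hs.2, hU ht hs.1 (Ne.symm hs.2)⟩
    rw [← mem_parabolic_iff.1 hx, ← Set.union_sdiff_cancel (Set.singleton_subset_iff.2 ht),
      retract_union hperp, h t ht, one_mul]
    exact parabolic_mono (fun s hs => hs.2) (retract_mem _ _)
  · exact parabolic_mono (Set.subset_compl_singleton_iff.2 ht) hx

theorem exists_hom_pow_mul_zpow (hU : Λ.IsIndepSet (insert u U)) (hu : u ∉ U) (m : V → ℕ)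
    (l : V → ℤ) : ∃ η : GG Λ →* GG Λ, (∀ v ∈ U, η (of v) = of v ^ m v * of u ^ l v) ∧
      (∀ x, η x ∈ parabolic (insert u U)) ∧
      ∀ t ∈ U, ∀ x, retract {t} (η x) = retract {t} x ^ m t := by
  classical
  let f : V → GG Λ := U.mulIndicator fun v => of v ^ m v * of u ^ l v
  have hf : ∀ v, f v ∈ parabolic (insert u U) := by
    intro v
    by_cases hv : v ∈ U
    · rw [show f v = _ from Set.mulIndicator_of_mem hv _]
      exact mul_mem (pow_mem (of_mem_parabolic (Set.mem_insert_of_mem u hv)) _)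
        (zpow_mem (of_mem_parabolic (Set.mem_insert u U)) _)
    · rw [show f v = _ from Set.mulIndicator_of_notMem hv _]
      exact one_mem _
  let η : GG Λ →* GG Λ := lift f fun a b _ _ => commute_of_isIndepSet hU (hf a) (hf b)
  have hη : ∀ v ∈ U, η (of v) = of v ^ m v * of u ^ l v := fun v hv => by
    rw [lift_of, show f v = _ from Set.mulIndicator_of_mem hv _]
  refine ⟨η, hη, fun x => ?_, fun t ht x => ?_⟩
  · exact parabolic_le_iff (H := (parabolic (insert u U)).comap η).2
      (fun v _ => by simpa [η] using hf v) (mem_parabolic_univ x)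
  · have hu1 : retract {t} (of u : GG Λ) = 1 := retract_of_notMem fun h => hu (h ▸ ht)
    induction x using induction_on with
    | one => simp
    | mul x y hx hy =>
      have hcomm : Commute (retract {t} x) (retract {t} y) :=
        commute_of_isIndepSet (Set.pairwise_singleton _ _) (retract_mem _ _) (retract_mem _ _)
      rw [map_mul, map_mul, hx, hy, map_mul, hcomm.mul_pow]
    | inv x hx => rw [map_inv, map_inv, hx, map_inv, inv_pow]
    | of v =>
      by_cases hv : v ∈ U
      · rw [hη v hv, map_mul, map_pow, map_zpow, hu1, one_zpow, mul_one]
        obtain rfl | hvt := eq_or_ne v t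
        · rfl
        · rw [retract_of_notMem (S := {t}) hvt, one_pow, one_pow]
      · have hvt : v ≠ t := fun h => hv (h ▸ ht)
        rw [lift_of, show f v = _ from Set.mulIndicator_of_notMem hv _, map_one,
          retract_of_notMem (S := {t}) hvt, one_pow]

/-- Precomposing with `of v ↦ of v ^ m * of u ^ (-l)` makes the images of the other vertices
trivial on the support of the image of `u`. -/
theorem EmbedsParabolic.exists_of_isIndepSet_insert (h : EmbedsParabolic φ (insert u U) D)
    (hU : Λ.IsIndepSet (insert u U)) (hu : u ∉ U) :
    ∃ ψ : GG Λ →* GG Γ, ∃ C ⊆ D, C.Nonempty ∧ EmbedsParabolic ψ U (D ∩ perp Γ C) := by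
  obtain ⟨φ', hφ', -, S, hSD, hS, hk⟩ :=
    h.exists_conj_isEssential (of_mem_parabolic (Set.mem_insert u U)) (of_ne_one u)
  obtain ⟨C, hCS, hC, hperp⟩ := exists_connected_component (Γ := Γ) hS
  have hcomm : ∀ v ∈ U, Commute (φ' (of v)) (φ' (of u)) := fun v hv =>
    (commute_of_isIndepSet hU (of_mem_parabolic (Set.mem_insert_of_mem u hv))
      (of_mem_parabolic (Set.mem_insert u U))).map φ'
  have hpow : ∀ v ∈ U, ∃ (m : ℕ) (l : ℤ),
      m ≠ 0 ∧ retract C (φ' (of v)) ^ m = retract C (φ' (of u)) ^ l := fun v hv =>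
    (hk.retract_of_sdiff_subset_perp hCS hperp).exists_pow_eq_zpow hC (retract_mem _ _)
      ((hcomm v hv).map (retract C))
  choose! m l hm hml using hpow
  obtain ⟨η, hη, hηmem, hηretract⟩ := exists_hom_pow_mul_zpow hU hu m (fun v => -l v)
  refine ⟨φ'.comp η, C, hCS.trans hSD, Set.nonempty_coe_sort.1 hC.nonempty, ?_, ?_⟩
  · refine parabolic_le_iff (H := (parabolic (D ∩ perp Γ C)).comap (φ'.comp η)).2 fun v hv => ?_
    refine mem_parabolic_inter (hφ'.map_mem _ (hηmem _))
      (hk.mem_perp_of_retract_eq_one hCS hperp ?_ ?_)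
    · rw [MonoidHom.comp_apply, hη v hv, map_mul, map_pow, map_zpow]
      exact ((hcomm v hv).pow_left _).mul_left ((Commute.refl _).zpow_left _)
    · rw [MonoidHom.comp_apply, hη v hv, map_mul, map_mul, map_pow, map_pow, map_zpow, map_zpow,
        hml v hv, zpow_neg, mul_inv_cancel]
  · intro x hx hx1
    refine eq_one_of_isIndepSet (hU.mono (Set.subset_insert u U)) hx fun t ht => ?_
    refine eq_one_of_pow_eq_one (hm t ht) ?_
    rw [← hηretract t ht, hφ'.eq_one _ (hηmem x) hx1, map_one]

theorem EmbedsParabolic.isIndContained_of_isIndepSet (hfin : U.Finite)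
    (h : EmbedsParabolic φ U D) (hU : Λ.IsIndepSet U) : Λ.induce U ⊴ Γ.induce D := by
  induction U, hfin using Set.Finite.induction_on generalizing φ D with
  | empty => exact IsIndContained.of_isEmpty
  | @insert u U hu _ ih =>
    obtain ⟨ψ, C, hCD, ⟨c, hc⟩, hψ⟩ := h.exists_of_isIndepSet_insert hU hu
    have hsingle : Λ.induce {u} ⊴ Γ.induce C :=
      ⟨⟨⟨fun _ => ⟨c, hc⟩, fun _ _ _ => Subsingleton.elim _ _⟩, by
        rintro ⟨_, rfl⟩ ⟨_, rfl⟩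
        exact iff_of_false Γ.irrefl Λ.irrefl⟩⟩
    refine isIndContained_induce_union hsingle (ih hψ (hU.mono (Set.subset_insert u U))) hCD
      fun v hv => mem_perp_singleton.2 ?_
    have huv : u ≠ v := fun h => hu (h ▸ hv)
    exact ⟨huv, hU (Set.mem_insert u U) (Set.mem_insert_of_mem u hv) huv⟩

end GG

/-! ### Pure elements commuting along a path -/

section PathPattern

open scoped commutatorElement

variable {G H ι : Type*} [Group G] [Group H] {X : ℕ → List G} {k : ℕ} {f f' m : G}

/-- The graph of non-commuting pairs in a family of group elements. A family realizes a graph `Δ` by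
commutation when its non-commuting graph is `Δ`. -/
def nonCommutingGraph (x : ι → G) : SimpleGraph ι where
  Adj i j := ¬Commute (x i) (x j)
  symm := ⟨fun _ _ h h' => h h'.symm⟩
  loopless := ⟨fun _ h => h (Commute.refl _)⟩

theorem nonCommutingGraph_adj {x : ι → G} {i j : ι} :
    (nonCommutingGraph x).Adj i j ↔ ¬Commute (x i) (x j) :=
  Iff.rfl

theorem commute_iff_of_nonCommutingGraph_eq {x : ι → G} {Δ : SimpleGraph ι}
    (h : nonCommutingGraph x = Δ) {i j : ι} : Commute (x i) (x j) ↔ ¬Δ.Adj i j := by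
  rw [← h, nonCommutingGraph_adj, not_not]

/-- The iterated commutator `⁅g k, ⁅g (k - 1), … ⁅g 1, g 0⁆⁆⁆`. -/
def iteratedCommutator (g : ℕ → G) : ℕ → G
  | 0 => g 0
  | k + 1 => ⁅g (k + 1), iteratedCommutator g k⁆

theorem map_iteratedCommutator (φ : G →* H) (g : ℕ → G) (k : ℕ) :
    φ (iteratedCommutator g k) = iteratedCommutator (fun i => φ (g i)) k := by
  induction k with
  | zero => rfl
  | succ k ih => rw [iteratedCommutator, iteratedCommutator, map_commutatorElement, ih]

theorem iteratedCommutator_mem {g : ℕ → G} {K : Subgroup G} (h : ∀ i ≤ k, g i ∈ K) :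
    iteratedCommutator g k ∈ K := by
  induction k with
  | zero => exact h 0 le_rfl
  | succ k ih =>
    have hk := h (k + 1) le_rfl
    have ih := ih fun i hi => h i (hi.trans k.le_succ)
    rw [iteratedCommutator, commutatorElement_def]
    exact mul_mem (mul_mem (mul_mem hk ih) (inv_mem hk)) (inv_mem ih)

/-- The end points of the chains `F 0, …, F k` with `F i ∈ X i` in which no two consecutive elements
commute. -/
def chainEnds (X : ℕ → List G) (k : ℕ) : Set G :=
  {f | ∃ F : ℕ → G, F k = f ∧ (∀ i ≤ k, F i ∈ X i) ∧ ∀ i < k, ¬Commute (F i) (F (i + 1))}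

theorem mem_of_mem_chainEnds (h : f ∈ chainEnds X k) : f ∈ X k := by
  obtain ⟨F, rfl, hF, -⟩ := h
  exact hF k le_rfl

theorem mem_chainEnds_zero (h : f ∈ X 0) : f ∈ chainEnds X 0 :=
  ⟨fun _ => f, rfl, fun _ hi => Nat.le_zero.1 hi ▸ h, fun _ hi => absurd hi (Nat.not_lt_zero _)⟩

theorem mem_chainEnds_succ (hf : f ∈ X (k + 1)) (hf' : f' ∈ chainEnds X k) (h : ¬Commute f' f) :
    f ∈ chainEnds X (k + 1) := by
  obtain ⟨F, rfl, hF, hc⟩ := hf'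
  refine ⟨Function.update F (k + 1) f, Function.update_self .., fun i hi => ?_, fun i hi => ?_⟩
  · obtain rfl | hi := hi.eq_or_lt
    · rwa [Function.update_self]
    · rw [Function.update_of_ne hi.ne]
      exact hF i (Nat.lt_succ_iff.1 hi)
  · rw [Function.update_of_ne hi.ne]
    obtain rfl | hi := (Nat.lt_succ_iff.1 hi).eq_or_lt
    · rwa [Function.update_self]
    · rw [Function.update_of_ne (Nat.succ_lt_succ hi).ne]
      exact hc i hi

/-- The subgroup generated by the end points of chains of length at most `k`. -/
def chainSubgroup (X : ℕ → List G) (k : ℕ) : Subgroup G :=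
  Subgroup.closure (⋃ i ≤ k, chainEnds X i)

theorem mem_chainSubgroup (h : f ∈ chainEnds X k) : f ∈ chainSubgroup X k :=
  Subgroup.subset_closure (Set.mem_biUnion (Set.mem_Iic.2 le_rfl) h)

theorem chainSubgroup_le_succ (X : ℕ → List G) (k : ℕ) :
    chainSubgroup X k ≤ chainSubgroup X (k + 1) :=
  Subgroup.closure_mono (Set.biUnion_subset_biUnion_left fun _ hi => Nat.le_succ_of_le hi)

theorem commute_of_notMem_chainEnds
    (hX : ∀ i ≤ k + 1, i ≠ k → ∀ f ∈ X (k + 1), ∀ f' ∈ X i, Commute f f') (hf : f ∈ X (k + 1))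
    (hfk : f ∉ chainEnds X (k + 1)) (hm : m ∈ chainSubgroup X (k + 1)) : Commute f m := by
  have hle : chainSubgroup X (k + 1) ≤ Subgroup.centralizer {f} := by
    refine (Subgroup.closure_le _).2 (Set.iUnion₂_subset fun i hi f' hf' => ?_)
    refine Subgroup.mem_centralizer_singleton_iff.2 ?_
    obtain rfl | hik := eq_or_ne i k
    · by_contra hc
      exact hfk (mem_chainEnds_succ hf hf' hc)
    · exact (hX i hi hik f hf f' (mem_of_mem_chainEnds hf')).symm
  exact (Subgroup.mem_centralizer_singleton_iff.1 (hle hm)).symm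

theorem iteratedCommutator_prod_mem_chainSubgroup
    (hX : ∀ j ≤ k, ∀ i ≤ j, i + 1 ≠ j → ∀ f ∈ X j, ∀ f' ∈ X i, Commute f f') :
    iteratedCommutator (fun i => (X i).prod) k ∈ chainSubgroup X k := by
  induction k with
  | zero => exact list_prod_mem fun f hf => mem_chainSubgroup (mem_chainEnds_zero hf)
  | succ k ih =>
    have ih := chainSubgroup_le_succ X k (ih fun j hj => hX j (hj.trans k.le_succ))
    have hnorm : (X (k + 1)).prod ∈ Subgroup.normalizer (chainSubgroup X (k + 1) : Set G) := by
      refine list_prod_mem fun f hf => ?_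
      by_cases hfk : f ∈ chainEnds X (k + 1)
      · exact Subgroup.le_normalizer (mem_chainSubgroup hfk)
      · refine Subgroup.centralizer_le_normalizer _ (Subgroup.mem_centralizer_iff.2 fun m hm => ?_)
        exact (commute_of_notMem_chainEnds (fun i hi hik => hX _ le_rfl i hi (by omega)) hf hfk
          hm).eq.symm
    rw [iteratedCommutator, commutatorElement_def]
    exact mul_mem ((Subgroup.mem_normalizer_iff.1 hnorm _).1 ih) (inv_mem ih)

theorem chainEnds_nonempty
    (hX : ∀ j ≤ k, ∀ i ≤ j, i + 1 ≠ j → ∀ f ∈ X j, ∀ f' ∈ X i, Commute f f')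
    (hne : iteratedCommutator (fun i => (X i).prod) k ≠ 1) : (chainEnds X k).Nonempty := by
  by_contra hempty
  rw [Set.not_nonempty_iff_eq_empty] at hempty
  refine hne ?_
  cases k with
  | zero =>
    have hX0 : X 0 = [] := List.eq_nil_iff_forall_not_mem.2 fun f hf =>
      hempty.subset (mem_chainEnds_zero hf)
    rw [iteratedCommutator, hX0, List.prod_nil]
  | succ k =>
    rw [iteratedCommutator, commutatorElement_eq_one_iff_commute]
    refine Commute.list_prod_left _ _ fun f hf => ?_
    refine commute_of_notMem_chainEnds (fun i hi hik => hX _ le_rfl i hi (by omega)) hf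
      (fun hfk => hempty.subset hfk) ?_
    exact chainSubgroup_le_succ X k
      (iteratedCommutator_prod_mem_chainSubgroup fun j hj => hX j (hj.trans k.le_succ))

end PathPattern

namespace GG

variable {V : Type} {Λ : SimpleGraph V}

theorem retract_compl_iteratedCommutator_of (v : ℕ → V) (k : ℕ) :
    retract ({v k}ᶜ : Set V) (iteratedCommutator (fun i => (of (v i) : GG Λ)) k) = 1 := by
  have hk : retract ({v k}ᶜ : Set V) (of (v k) : GG Λ) = 1 := retract_of_notMem fun h => h rfl
  cases k with
  | zero => exact hk
  | succ k => rw [iteratedCommutator, map_commutatorElement, hk, commutatorElement_one_left]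

theorem iteratedCommutator_of_ne_one {v : ℕ → V} {k : ℕ} (hv : Set.InjOn v (Set.Iic k))
    (hadj : ∀ i < k, Λ.Adj (v i) (v (i + 1))) :
    iteratedCommutator (fun i => (of (v i) : GG Λ)) k ≠ 1 := by
  induction k with
  | zero => exact of_ne_one _
  | succ k ih =>
    intro h
    rw [iteratedCommutator, commutatorElement_eq_one_iff_commute] at h
    have hmem : iteratedCommutator (fun i => (of (v i) : GG Λ)) k ∈
        parabolic ({v (k + 1)}ᶜ : Set V) := by
      refine iteratedCommutator_mem fun i hi => of_mem_parabolic fun hik => ?_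
      have := hv (Set.mem_Iic.2 (hi.trans k.le_succ)) (Set.mem_Iic.2 le_rfl) hik
      omega
    have hperp : perp Λ {v (k + 1)} ⊆ {v k}ᶜ := by
      rintro s hs rfl
      exact (mem_perp_singleton.1 hs).2 (hadj k k.lt_succ_self).symm
    have hmem' := parabolic_mono hperp (mem_parabolic_perp_of_commute hmem h.symm)
    refine ih (hv.mono (Set.Iic_subset_Iic.2 k.le_succ))
      (fun i hi => hadj i (hi.trans k.lt_succ_self)) ?_
    rw [← mem_parabolic_iff.1 hmem', retract_compl_iteratedCommutator_of]

theorem exists_isPure_nonCommutingGraph_eq {n : ℕ} (e : pathGraph n ↪g Λ) (φ : GG Λ →* GG Γ)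
    (hφ : ∀ x ∈ parabolic (Set.range e), φ x = 1 → x = 1) :
    ∃ F : Fin n → GG Γ, (∀ i, IsPure (F i)) ∧ nonCommutingGraph F = pathGraph n := by
  obtain _ | n := n
  · exact ⟨finZeroElim, finZeroElim, Subsingleton.elim _ _⟩
  let v : ℕ → V := fun i => e (Fin.ofNat (n + 1) i)
  have hadj : ∀ i ≤ n, ∀ j ≤ n, Λ.Adj (v i) (v j) ↔ i + 1 = j ∨ j + 1 = i := fun i hi j hj => by
    rw [e.map_adj_iff, pathGraph_adj, Fin.val_ofNat, Fin.val_ofNat, Nat.mod_eq_of_lt (by omega),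
      Nat.mod_eq_of_lt (by omega)]
  have hv : Set.InjOn v (Set.Iic n) := fun i hi j hj hij => by
    have := congrArg Fin.val (e.injective hij)
    rwa [Fin.val_ofNat, Fin.val_ofNat, Nat.mod_eq_of_lt (Nat.lt_succ_iff.2 hi),
      Nat.mod_eq_of_lt (Nat.lt_succ_iff.2 hj)] at this
  choose X hXprod hXpure hXcomm using fun i => exists_pure_factors (φ (of (v i)))
  have hX : ∀ i ≤ n, ∀ j ≤ n, ¬(i + 1 = j ∨ j + 1 = i) → ∀ f ∈ X i, ∀ f' ∈ X j, Commute f f' := by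
    intro i hi j hj hij f hf f' hf'
    have hcomm : Commute (φ (of (v i))) (φ (of (v j))) :=
      (commute_of fun h => hij ((hadj i hi j hj).1 h)).map φ
    exact (hXcomm i _ (hXcomm j _ hcomm f' hf').symm f hf).symm
  have hne : iteratedCommutator (fun i => (X i).prod) n ≠ 1 := by
    simp only [← hXprod]
    rw [← map_iteratedCommutator φ fun i => of (v i)]
    refine fun h => iteratedCommutator_of_ne_one hv
      (fun i hi => (hadj i hi.le _ hi).2 (Or.inl rfl)) (hφ _ ?_ h)
    exact iteratedCommutator_mem fun i _ => of_mem_parabolic ⟨_, rfl⟩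
  obtain ⟨_, F, -, hF, hchain⟩ := chainEnds_nonempty
    (fun j hj i hij h => hX j hj i (hij.trans hj) (by omega)) hne
  refine ⟨fun i => F i, fun i => hXpure i _ (hF i i.is_le), ?_⟩
  ext i j
  rw [nonCommutingGraph_adj, pathGraph_adj, not_iff_comm]
  refine ⟨fun h => hX i i.is_le j j.is_le h _ (hF i i.is_le) _ (hF j j.is_le), ?_⟩
  rintro hcomm (h | h)
  · exact hchain i (by omega) (h ▸ hcomm)
  · exact hchain j (by omega) (h ▸ hcomm.symm)

end GG

/-! ### From pure elements to conjugates of vertices -/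

theorem freeGroup_lift_eq_self {α : Type*} [DecidableEq α] {g : α → FreeGroup α} {y : FreeGroup α}
    (h : ∀ p ∈ y.toWord, g p.1 = FreeGroup.of p.1) : FreeGroup.lift g y = y := by
  calc
    FreeGroup.lift g y = FreeGroup.lift FreeGroup.of y := by
      rw [← FreeGroup.mk_toWord (x := y), FreeGroup.lift_mk, FreeGroup.lift_mk]
      exact congrArg List.prod (List.map_congr_left fun p hp => by rw [h p hp])
    _ = y := by rw [FreeGroup.lift_of_eq_id, MonoidHom.id_apply]

theorem freeGroup_eq_one_of_commute_of {α : Type*} [DecidableEq α] {a : α} {f : FreeGroup α}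
    (h : Commute f (FreeGroup.of a)) (ha : ∀ p ∈ f.toWord, p.1 ≠ a) : f = 1 := by
  rcases hw : f.toWord with _ | ⟨b, L⟩
  · exact FreeGroup.toWord_eq_nil_iff.1 hw
  · have hba : b.1 ≠ a := ha b (hw ▸ List.mem_cons_self)
    have hleft : (FreeGroup.of a * f).toWord = (a, true) :: b :: L := by
      rw [FreeGroup.toWord_mul, FreeGroup.toWord_of, List.singleton_append,
        FreeGroup.reduce.cons, FreeGroup.reduce_toWord, hw]
      simp [hba.symm]
    have hright : (f * FreeGroup.of a).toWord = b :: L ++ [(a, true)] := by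
      refine ((FreeGroup.toWord_mul_sublist f (FreeGroup.of a)).eq_of_length_le ?_).trans (by
        rw [hw, FreeGroup.toWord_of])
      simp [h.eq, hleft, hw]
    rw [h.eq, hleft, List.cons_append, List.cons.injEq] at hright
    exact absurd (congrArg Prod.fst hright.1).symm hba

theorem commute_conj_right_iff_of_commute {G : Type*} [Group G] {h z d : G} (hd : Commute h d) :
    Commute h (d * z * d⁻¹) ↔ Commute h z := by
  rw [commute_conj_right_iff, mul_assoc, hd.eq, inv_mul_cancel_left]

theorem pathGraph_neighborSet_injective {n : ℕ} (hn : 4 ≤ n) :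
    Function.Injective (pathGraph n).neighborSet := by
  intro i j hij
  have hadj (l : ℕ) (hl : l < n) :
      (i.1 + 1 = l ∨ l + 1 = i.1) ↔ (j.1 + 1 = l ∨ l + 1 = j.1) := by
    simpa only [mem_neighborSet, pathGraph_adj] using Set.ext_iff.1 hij ⟨l, hl⟩
  have _ := hadj 0 (by omega)
  have _ := hadj 1 (by omega)
  have _ := hadj 3 (by omega)
  have _ := hadj (i - 1) (by omega)
  have _ := hadj (j - 1) (by omega)
  exact Fin.ext (by omega)

theorem exists_pathGraph_neighborSet_eq_pair {n : ℕ} (hn : 2 ≤ n) (m : Fin n) :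
    ∃ a b, (pathGraph n).neighborSet m = {a, b} := by
  obtain ⟨a, b, ha, hb, hab⟩ : ∃ a b, a < n ∧ b < n ∧
      ∀ i < n, (m.1 + 1 = i ∨ i + 1 = m.1) ↔ (i = a ∨ i = b) := by
    obtain hm | hm := Nat.eq_zero_or_pos m.1
    · exact ⟨1, 1, by omega, by omega, by omega⟩
    obtain hm' | hm' := Nat.lt_or_ge (m + 1) n
    · exact ⟨m - 1, m + 1, by omega, by omega, by omega⟩
    · exact ⟨m - 1, m - 1, by omega, by omega, by omega⟩
  refine ⟨⟨a, ha⟩, ⟨b, hb⟩, Set.ext fun i => ?_⟩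
  simpa only [mem_neighborSet, pathGraph_adj, Set.mem_insert_iff, Set.mem_singleton_iff,
    Fin.ext_iff] using hab i i.2

namespace GG

variable {V : Type} {Γ : SimpleGraph V} {C C' : Set V} {t : V} {k k' p p' q z h h' : GG Γ}

theorem IsEssential.commute_of_mem_of_commute (hk : IsEssential C k)
    (hC : (Γ.induce C).Connected) (hk' : k' ∈ parabolic C) (hkk' : Commute k' k)
    (hz : Commute z k) : Commute z k' := by
  rw [← mem_parabolic_iff.1 (hk.mem_of_commute hz), retract_union subset_rfl]
  have hretract : Commute (retract C z) k := by
    simpa only [mem_parabolic_iff.1 hk.1] using hz.map (retract C)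
  exact (hk.commute_of_commute hC (retract_mem _ _) hretract hk' hkk').mul_left
    (commute_of_subset_perp subset_rfl hk' (retract_mem _ _)).symm

theorem retract_conj_eq_one_of_disjoint (hk : k ∈ parabolic C') (hCC' : Disjoint C C') :
    retract C (q * k * q⁻¹) = 1 := by
  have hempty : retract C k ∈ parabolic (C ∩ C') := retract_mem_inter hk
  rw [hCC'.inter_eq, parabolic_empty, Subgroup.mem_bot] at hempty
  rw [map_mul, map_mul, hempty, mul_one, map_inv, mul_inv_cancel]

/-- The essential support of `k'` is connected and lies in `C ∪ perp Γ C`, so it is all of `C` or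
lies in `perp Γ C`. -/
theorem IsEssential.conj_mem_perp_or_isEssential_conj (hk : IsEssential C k)
    (hC : (Γ.induce C).Connected) (hk' : IsEssential C' k') (hC' : (Γ.induce C').Connected)
    (h : Commute k (q * k' * q⁻¹)) :
    q * k' * q⁻¹ ∈ parabolic (perp Γ C) ∨ IsEssential C (q * k' * q⁻¹) := by
  have hmem : q * k' * q⁻¹ ∈ parabolic (C ∪ perp Γ C) := hk.mem_of_commute h.symm
  have hsplit := mem_parabolic_iff.1 hmem
  rw [retract_union subset_rfl] at hsplit
  have hmem' : q⁻¹ * k * q⁻¹⁻¹ ∈ parabolic (C' ∪ perp Γ C') :=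
    hk'.mem_of_commute (by rw [inv_inv]; exact commute_conj_right_iff.1 h)
  obtain hsub' | hperp' := subset_or_subset_perp_of_connected hC' (hk'.subset_of_conj_mem hmem)
  · have hsub : C ⊆ C' := by
      refine (subset_or_subset_perp_of_connected hC (hk.subset_of_conj_mem hmem')).resolve_right
        fun hperp => ?_
      obtain ⟨x, hx⟩ := Set.nonempty_coe_sort.1 hC'.nonempty
      exact notMem_perp_of_mem hx (hperp (hsub' hx))
    obtain rfl := hsub.antisymm hsub'
    rw [retract_conj_eq_one_of_disjoint (C := perp Γ C) hk'.1
      (Set.disjoint_left.2 fun x hx hxC => notMem_perp_of_mem hxC hx), mul_one] at hsplit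
    refine .inr ⟨mem_parabolic_iff.2 hsplit, fun r a ha hr => hk'.2 (r * q) a ha ?_⟩
    simpa only [mul_inv_rev, mul_assoc] using hr
  · rw [retract_conj_eq_one_of_disjoint (C := C) hk'.1
      (Set.disjoint_left.2 fun x hx hxC' => notMem_perp_of_mem hx (hperp' hxC')), one_mul] at hsplit
    exact .inl (hsplit ▸ retract_mem _ _)

theorem IsEssential.forall_commute_or_commute_iff (hk : IsEssential C k)
    (hC : (Γ.induce C).Connected) (hk' : IsEssential C' k') (hC' : (Γ.induce C').Connected)
    (h : Commute (p * k * p⁻¹) (p' * k' * p'⁻¹)) :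
    (∀ y ∈ parabolic C, Commute (p * y * p⁻¹) (p' * k' * p'⁻¹)) ∨
      ∀ z, Commute z (p * k * p⁻¹) ↔ Commute z (p' * k' * p'⁻¹) := by
  obtain ⟨q, rfl⟩ : ∃ q, p' = p * q := ⟨p⁻¹ * p', by group⟩
  have hconj : p * q * k' * (p * q)⁻¹ = p * (q * k' * q⁻¹) * p⁻¹ := by group
  simp only [hconj, Commute.conj_iff] at h ⊢
  refine (hk.conj_mem_perp_or_isEssential_conj hC hk' hC' h).imp
    (fun hperp y hy => commute_of_subset_perp subset_rfl hy hperp) fun hess z => ?_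
  rw [commute_conj_right_iff, commute_conj_right_iff]
  exact ⟨hk.commute_of_mem_of_commute hC hess.1 h.symm, hess.commute_of_mem_of_commute hC hk.1 h⟩

/-- Both `h` and `t⁻¹ h t` commute with `z`, so `z` fixes all letters of their free parts; but it
moves the base coset, which is the letter contributed by `t`. -/
theorem commute_of_of_commute_conj (hz : z ∈ parabolic ({t}ᶜ : Set V))
    (hzt : ¬Commute z (of t)) (h₁ : Commute h z) (h₂ : Commute h (of t * z * (of t)⁻¹)) :
    Commute h (of t) := by
  classical
  have hbase : z • (baseCoset t : LinkCoset Γ t) ≠ baseCoset t := fun hfix =>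
    hzt (commute_of_subset_perp (T := {t}) (subset_perp_comm.1 subset_rfl)
      (smul_baseCoset_eq_self_iff.1 hfix) (of_mem_parabolic rfl))
  let e : FreeGroup (LinkCoset Γ t) := FreeGroup.of (baseCoset t)
  let r : FreeGroup (LinkCoset Γ t) →* FreeGroup (LinkCoset Γ t) :=
    FreeGroup.lift fun c => if c = baseCoset t then 1 else FreeGroup.of c
  have letter_ne {x : GG Γ} (hx : Commute z x) {a} (ha : a ∈ (freePart t x).toWord) :
      a.1 ≠ baseCoset t := fun heq =>
    hbase (heq ▸ smul_eq_self_of_cosetAut_eq_self (cosetAut_freePart_of_commute hz hx) ha)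
  have hr {x : GG Γ} (hx : Commute z x) : r (freePart t x) = freePart t x :=
    freeGroup_lift_eq_self fun a ha => if_neg (letter_ne hx ha)
  have hre : r e = 1 := by simp [r, e]
  let κ := retract ({t}ᶜ : Set V) h
  have hconj : freePart t ((of t)⁻¹ * (h * of t)) =
      e⁻¹ * (freePart t h * FreeGroup.of (κ • baseCoset t)) := by
    have hcancel := freePart_mul t (of t) ((of t)⁻¹ * (h * of t))
    rw [mul_inv_cancel_left, freePart_mul, freePart_of_self, cosetAut_of,
      retract_of_notMem (by simp), map_one, MulAut.one_apply] at hcancel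
    exact eq_inv_mul_of_mul_eq hcancel.symm
  have hrconj := hr (x := (of t)⁻¹ * (h * of t)) (by
    rw [← mul_assoc]; exact (commute_conj_right_iff.1 h₂).symm)
  rw [hconj, map_mul, map_inv, hre, inv_one, one_mul, map_mul, hr h₁.symm] at hrconj
  have hκ : κ • (baseCoset t : LinkCoset Γ t) = baseCoset t := by
    by_contra hne
    have hrκ : r (FreeGroup.of (κ • baseCoset t)) = FreeGroup.of (κ • baseCoset t) := by
      rw [FreeGroup.lift_apply_of, if_neg hne]
    rw [hrκ, right_eq_mul, inv_eq_one] at hrconj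
    exact FreeGroup.of_ne_one _ hrconj
  have hfree : freePart t h = 1 := by
    refine freeGroup_eq_one_of_commute_of (a := baseCoset t) ?_ fun a => letter_ne h₁.symm
    rw [hκ, hre, mul_one, eq_inv_mul_iff_mul_eq] at hrconj
    exact hrconj.symm
  have hh : h ∈ parabolic (perp Γ {t}) := by
    rw [← mem_parabolic_iff.1 (freePart_eq_one_iff.1 hfree)]
    exact smul_baseCoset_eq_self_iff.1 hκ
  exact commute_of_subset_perp (T := {t}) (subset_perp_comm.1 subset_rfl) hh (of_mem_parabolic rfl)

theorem isEssential_of (a : V) : IsEssential {a} (of a : GG Γ) := by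
  refine ⟨of_mem_parabolic rfl, fun p b hb hmem => of_ne_one (Γ := Γ) a ?_⟩
  rw [Set.mem_singleton_iff.1 hb, sdiff_self, Set.bot_eq_empty, parabolic_empty,
    Subgroup.mem_bot] at hmem
  exact conj_eq_one_iff.1 hmem

/-- A conjugate of a generator. -/
def IsVertexConj (x : GG Γ) : Prop := ∃ p a, x = p * of a * p⁻¹

theorem isVertexConj_of (a : V) : IsVertexConj (of a : GG Γ) := ⟨1, a, by simp⟩

theorem IsVertexConj.conj (h : IsVertexConj z) (g : GG Γ) : IsVertexConj (g * z * g⁻¹) := by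
  obtain ⟨p, a, rfl⟩ := h
  exact ⟨g * p, a, by group⟩

theorem IsVertexConj.isPure (h : IsVertexConj z) : IsPure z := by
  obtain ⟨p, a, rfl⟩ := h
  exact ⟨p, of a, {a}, rfl, isEssential_of a, .of_subsingleton⟩

theorem not_commute_of_of_adj {c : V} (hct : Γ.Adj c t) (hzt : z ∈ parabolic ({t}ᶜ : Set V))
    (hzc : z ∉ parabolic ({c}ᶜ : Set V)) : ¬Commute z (of t) := fun hcomm =>
  hzc (parabolic_mono (Set.subset_compl_singleton_iff.2 fun hc =>
    (mem_perp_singleton.1 hc).2 hct.symm) (mem_parabolic_perp_of_commute hzt hcomm))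

theorem commute_of_of_conj_mem (hz : z ∈ parabolic ({t}ᶜ : Set V))
    (hconj : of t * z * (of t)⁻¹ ∈ parabolic ({t}ᶜ : Set V)) : Commute z (of t) := by
  have heq := mem_parabolic_iff.1 hconj
  rw [map_mul, map_mul, map_inv, retract_of_notMem (by simp), mem_parabolic_iff.1 hz, one_mul,
    inv_one, mul_one, eq_mul_inv_iff_mul_eq] at heq
  exact heq

theorem exists_not_commute_of_adj
    (hno : ∀ x ∈ parabolic C, IsVertexConj x → ¬Commute h x → Commute h' x)
    {N : Set V} (hN : N = {c ∈ C | Commute h' (of c)}) {c : V} (hct : Γ.Adj c t) (ht : t ∈ C)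
    (hz : z ∈ parabolic N ∧ IsVertexConj z ∧ ¬Commute h z ∧ z ∉ parabolic ({c}ᶜ : Set V)) :
    t ∈ N ∧
      ∃ z ∈ parabolic N, IsVertexConj z ∧ ¬Commute h z ∧ z ∉ parabolic ({t}ᶜ : Set V) := by
  obtain ⟨hzN, hzv, hhz, hzc⟩ := hz
  have hNC : N ⊆ C := hN ▸ Set.sep_subset _ _
  by_cases hht : Commute h (of t)
  swap
  · have htN : t ∈ N := hN ▸ ⟨ht, hno _ (of_mem_parabolic ht) (isVertexConj_of t) hht⟩
    exact ⟨htN, of t, of_mem_parabolic htN, isVertexConj_of t, hht, by simp [of_mem_parabolic_iff]⟩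
  have hhconj : ¬Commute h (of t * z * (of t)⁻¹) := by
    rwa [commute_conj_right_iff_of_commute hht]
  have htN : t ∈ N := by
    by_contra htN
    have hzt : z ∈ parabolic ({t}ᶜ : Set V) :=
      parabolic_mono (Set.subset_compl_singleton_iff.2 htN) hzN
    have hconjC : of t * z * (of t)⁻¹ ∈ parabolic C := mul_mem
      (mul_mem (of_mem_parabolic ht) (parabolic_mono hNC hzN)) (inv_mem (of_mem_parabolic ht))
    have hh'z : Commute h' z := commute_of_forall_commute (fun v hv => (hN ▸ hv).2) hzN
    exact htN (hN ▸ ⟨ht, commute_of_of_commute_conj hzt (not_commute_of_of_adj hct hzt hzc) hh'z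
      (hno _ hconjC (hzv.conj _) hhconj)⟩)
  refine ⟨htN, ?_⟩
  by_cases hzt : z ∈ parabolic ({t}ᶜ : Set V)
  · exact ⟨_, mul_mem (mul_mem (of_mem_parabolic htN) hzN) (inv_mem (of_mem_parabolic htN)),
      hzv.conj _, hhconj, fun hmem =>
        not_commute_of_of_adj hct hzt hzc (commute_of_of_conj_mem hzt hmem)⟩
  · exact ⟨z, hzN, hzv, hhz, hzt⟩

theorem exists_isVertexConj_not_commute (hC : (Γ.induce C).Connected)
    (hh : ∃ a ∈ C, ¬Commute h (of a)) (hh' : ∃ a ∈ C, ¬Commute h' (of a)) :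
    ∃ x ∈ parabolic C, IsVertexConj x ∧ ¬Commute h x ∧ ¬Commute h' x := by
  by_contra! hno
  obtain ⟨a, ha, hha⟩ := hh
  obtain ⟨b, hb, hhb⟩ := hh'
  let N : Set V := {c ∈ C | Commute h' (of c)}
  let B : Set V := {c ∈ N |
    ∃ z ∈ parabolic N, IsVertexConj z ∧ ¬Commute h z ∧ z ∉ parabolic ({c}ᶜ : Set V)}
  have haN : a ∈ N := ⟨ha, hno _ (of_mem_parabolic ha) (isVertexConj_of a) hha⟩
  have haB : a ∈ B := ⟨haN, of a, of_mem_parabolic haN, isVertexConj_of a, hha,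
    by simp [of_mem_parabolic_iff]⟩
  have hCB : C ⊆ B ∪ perp Γ B := by
    refine fun t ht => or_iff_not_imp_left.2 fun htB c hcB =>
      ⟨fun hct => htB (hct ▸ hcB), fun hct => htB ?_⟩
    obtain ⟨-, z, hz⟩ := hcB
    exact exists_not_commute_of_adj hno rfl hct ht hz
  obtain hsub | hperp := subset_or_subset_perp_of_connected hC hCB
  · exact hhb (hsub hb).1.2
  · exact notMem_perp_of_mem haB (hperp ha)

section Pattern

variable {ι : Type*} {Δ : SimpleGraph ι} {F : ι → GG Γ}

theorem nonCommutingGraph_update [DecidableEq ι] {m : ι} (hF : nonCommutingGraph F = Δ)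
    (hz : ∀ j ≠ m, Commute z (F j) ↔ ¬Δ.Adj m j) :
    nonCommutingGraph (Function.update F m z) = Δ := by
  ext i j
  rw [nonCommutingGraph_adj, not_iff_comm]
  obtain rfl | hi := eq_or_ne i m <;> obtain rfl | hj := eq_or_ne j i
  · simp
  · simpa [hj] using (hz j hj).symm
  · simp
  · obtain rfl | hj := eq_or_ne j m
    · simpa [hi, Δ.adj_comm i, Commute.symm_iff (a := F i)] using (hz i hi).symm
    · simpa [hi, hj] using (commute_iff_of_nonCommutingGraph_eq hF).symm

/-- Distinct vertices of the pattern have distinct neighbourhoods, so `F m` and any `F j` commuting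
with it have different centralizers and hence supports in general position. -/
theorem exists_isVertexConj_update [DecidableEq ι] (hF : ∀ i, IsPure (F i))
    (hΔ : nonCommutingGraph F = Δ) (hinj : Function.Injective Δ.neighborSet) {m a b : ι}
    (hm : Δ.neighborSet m = {a, b}) :
    ∃ x, IsVertexConj x ∧ nonCommutingGraph (Function.update F m x) = Δ := by
  obtain ⟨p, k, C, hFm, hk, hC⟩ := hF m
  have hcomm {i j : ι} := commute_iff_of_nonCommutingGraph_eq hΔ (i := i) (j := j)
  have hmoved (c : ι) (hc : Δ.Adj m c) : ∃ d ∈ C, ¬Commute (p⁻¹ * F c * p) (of d) := by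
    by_contra! hall
    have hcm := commute_of_forall_commute hall hk.1
    rw [← commute_conj_right_iff, ← hFm, hcomm] at hcm
    exact hcm hc.symm
  have hadj (j : ι) : Δ.Adj m j ↔ j = a ∨ j = b := by
    rw [← mem_neighborSet, hm, Set.mem_insert_iff, Set.mem_singleton_iff]
  obtain ⟨y, hyC, hy, hya, hyb⟩ := exists_isVertexConj_not_commute hC
    (hmoved a ((hadj a).2 (.inl rfl))) (hmoved b ((hadj b).2 (.inr rfl)))
  rw [← commute_conj_right_iff] at hya hyb
  refine ⟨p * y * p⁻¹, hy.conj p, nonCommutingGraph_update hΔ fun j hjm => ⟨fun h hmj => ?_,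
    fun hmj => ?_⟩⟩
  · obtain rfl | rfl := (hadj j).1 hmj
    exacts [hya h.symm, hyb h.symm]
  · obtain ⟨p', k', C', hFj, hk', hC'⟩ := hF j
    have hmj := hcomm.2 hmj
    rw [hFm, hFj] at hmj
    obtain hgen | hcentralizer := hk.forall_commute_or_commute_iff hC hk' hC' hmj
    · exact hFj ▸ hgen y hyC
    · refine absurd (hinj (Set.ext fun l => ?_)) hjm
      have hl := hcentralizer (F l)
      rw [← hFm, ← hFj, hcomm, hcomm, not_iff_not] at hl
      rw [mem_neighborSet, mem_neighborSet, Δ.adj_comm, ← hl, Δ.adj_comm]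

theorem exists_isVertexConj_nonCommutingGraph_eq [Finite ι] (hF : ∀ i, IsPure (F i))
    (hΔ : nonCommutingGraph F = Δ) (hinj : Function.Injective Δ.neighborSet)
    (hpair : ∀ m, ∃ a b, Δ.neighborSet m = {a, b}) :
    ∃ x : ι → GG Γ, (∀ i, IsVertexConj (x i)) ∧ nonCommutingGraph x = Δ := by
  classical
  have := Fintype.ofFinite ι
  suffices ∀ s : Finset ι, ∃ x : ι → GG Γ, (∀ i, IsPure (x i)) ∧ (∀ i ∈ s, IsVertexConj (x i)) ∧
      nonCommutingGraph x = Δ by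
    obtain ⟨x, -, hx, hΔx⟩ := this Finset.univ
    exact ⟨x, fun i => hx i (Finset.mem_univ i), hΔx⟩
  intro s
  induction s using Finset.induction_on with
  | empty => exact ⟨F, hF, by simp, hΔ⟩
  | insert m s _ ih =>
    obtain ⟨x, hpure, hconj, hx⟩ := ih
    obtain ⟨a, b, hm⟩ := hpair m
    obtain ⟨y, hy, hxy⟩ := exists_isVertexConj_update hpure hx hinj hm
    refine ⟨_, fun i => ?_, fun i hi => ?_, hxy⟩ <;> obtain rfl | him := eq_or_ne i m
    · simpa using hy.isPure
    · simpa [him] using hpure i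
    · simpa using hy
    · simpa [him] using hconj i (Finset.mem_of_mem_insert_of_ne hi him)

end Pattern

end GG

/-! ### Sides and the length of conjugators -/

section FreeGroup

variable {α : Type*} [DecidableEq α] {l s : α × Bool} {u : FreeGroup α}

theorem freeGroup_toWord_mk_singleton_mul (s : α × Bool) (u : FreeGroup α) :
    (FreeGroup.mk [s] * u).toWord = s :: u.toWord ∨
      u.toWord = (s.1, !s.2) :: (FreeGroup.mk [s] * u).toWord := by
  rw [FreeGroup.toWord_mul, FreeGroup.toWord_mk, FreeGroup.reduce_singleton,
    List.singleton_append, FreeGroup.reduce.cons, FreeGroup.reduce_toWord]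
  rcases u.toWord with _ | ⟨q, L⟩
  · exact .inl rfl
  · by_cases hq : s.1 = q.1 ∧ s.2 = !q.2
    · exact .inr (by simp [hq])
    · exact .inl (by simp [hq])

theorem freeGroup_toWord_mul_mk_singleton (u : FreeGroup α) (s : α × Bool) :
    (u * FreeGroup.mk [s]).toWord = u.toWord ++ [s] ∨
      u.toWord = (u * FreeGroup.mk [s]).toWord ++ [(s.1, !s.2)] := by
  have hleft := freeGroup_toWord_mk_singleton_mul (s.1, !s.2) u⁻¹
  rw [show FreeGroup.mk [(s.1, !s.2)] * u⁻¹ = (u * FreeGroup.mk [s])⁻¹ by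
    rw [mul_inv_rev, FreeGroup.inv_mk]; rfl, FreeGroup.toWord_inv, FreeGroup.toWord_inv] at hleft
  refine hleft.imp (fun h => ?_) fun h => ?_ <;>
  simpa [FreeGroup.invRev, Function.comp_def] using congrArg FreeGroup.invRev h

theorem freeGroup_eq_one_of_mul_mk_singleton_mem_startsWith (hu : u ∉ FreeGroup.startsWith l)
    (h : u * FreeGroup.mk [s] ∈ FreeGroup.startsWith l) : u = 1 ∧ s = l := by
  simp only [FreeGroup.startsWith, Set.mem_ofPred_eq] at hu h
  rw [← FreeGroup.toWord_eq_nil_iff]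
  obtain hword | hword := freeGroup_toWord_mul_mk_singleton u s <;> grind

theorem freeGroup_exists_prefix_of_mul_mk_mem_startsWith (hu : u ∉ FreeGroup.startsWith l)
    {L : List (α × Bool)} (h : u * FreeGroup.mk L ∈ FreeGroup.startsWith l) :
    ∃ L₁ L₂, L = L₁ ++ l :: L₂ ∧ u * FreeGroup.mk L₁ = 1 := by
  induction L generalizing u with
  | nil => exact absurd (by simpa [← FreeGroup.one_eq_mk] using h) hu
  | cons s L ih =>
    have cons_eq (M : List (α × Bool)) :
        u * FreeGroup.mk (s :: M) = u * FreeGroup.mk [s] * FreeGroup.mk M := by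
      rw [mul_assoc, FreeGroup.mul_mk, List.singleton_append]
    by_cases hs : u * FreeGroup.mk [s] ∈ FreeGroup.startsWith l
    · obtain ⟨rfl, rfl⟩ := freeGroup_eq_one_of_mul_mk_singleton_mem_startsWith hu hs
      exact ⟨[], L, rfl, by rw [← FreeGroup.one_eq_mk, mul_one]⟩
    · obtain ⟨L₁, L₂, rfl, hL₁⟩ := ih hs (cons_eq L ▸ h)
      exact ⟨s :: L₁, L₂, rfl, (cons_eq L₁).trans hL₁⟩

theorem freeGroup_fst_eq_of_mem_toWord_of_zpow {c : α} {j : ℤ}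
    (hs : s ∈ (FreeGroup.of c ^ j).toWord) : s.1 = c := by
  obtain ⟨m, rfl | rfl⟩ := j.eq_nat_or_neg
  · rw [zpow_natCast, FreeGroup.toWord_of_pow] at hs
    rw [List.eq_of_mem_replicate hs]
  · rw [zpow_neg, zpow_natCast, FreeGroup.toWord_inv, FreeGroup.toWord_of_pow] at hs
    simp only [FreeGroup.invRev, List.map_replicate, List.reverse_replicate] at hs
    rw [List.eq_of_mem_replicate hs]

end FreeGroup

namespace GG

variable {V : Type} {Γ : SimpleGraph V} {t a b : V} {x y p q r z : GG Γ}

section Words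

variable {s : V × Bool} {w w' : List (V × Bool)}

/-- The element of `G(Γ)` spelled by a word in the vertices and their inverses. -/
def wordProd (w : List (V × Bool)) : GG Γ := FreeGroup.lift of (FreeGroup.mk w)

theorem wordProd_nil : (wordProd [] : GG Γ) = 1 := rfl

theorem wordProd_append : (wordProd (w ++ w') : GG Γ) = wordProd w * wordProd w' := by
  rw [wordProd, ← FreeGroup.mul_mk, map_mul, wordProd, wordProd]

theorem wordProd_cons : (wordProd (s :: w) : GG Γ) = wordProd [s] * wordProd w :=
  wordProd_append (w := [s])

theorem inv_wordProd_singleton : (wordProd [s] : GG Γ)⁻¹ = wordProd [(s.1, !s.2)] := by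
  rw [wordProd, ← map_inv, FreeGroup.inv_mk]
  rfl

theorem wordProd_surjective : Function.Surjective (wordProd : List (V × Bool) → GG Γ) := by
  intro g
  obtain ⟨f, rfl⟩ : ∃ f, FreeGroup.lift of f = g := by
    induction g using induction_on with
    | one => exact ⟨1, map_one _⟩
    | mul x y hx hy =>
      obtain ⟨⟨f, rfl⟩, f', rfl⟩ := And.intro hx hy
      exact ⟨f * f', map_mul _ _ _⟩
    | inv x hx =>
      obtain ⟨f, rfl⟩ := hx
      exact ⟨f⁻¹, map_inv _ _⟩
    | of v => exact ⟨FreeGroup.of v, FreeGroup.lift_apply_of⟩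
  classical
  exact ⟨f.toWord, by rw [wordProd, FreeGroup.mk_toWord]⟩

theorem commute_wordProd_singleton_iff : Commute x (wordProd [s]) ↔ Commute x (of s.1) := by
  obtain ⟨v, _ | _⟩ := s <;> simp [wordProd]

theorem wordProd_singleton_mem_parabolic {S : Set V} (h : s.1 ∈ S) :
    (wordProd [s] : GG Γ) ∈ parabolic S := by
  obtain ⟨v, _ | _⟩ := s
  · simpa [wordProd] using of_mem_parabolic h
  · simpa [wordProd] using of_mem_parabolic h

theorem splitting_wordProd_singleton {ε : Bool} : splitting t (wordProd [(t, ε)] : GG Γ) =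
    SemidirectProduct.inl (FreeGroup.mk [(baseCoset t, ε)]) := by
  cases ε
  · rw [show FreeGroup.mk [((baseCoset t : LinkCoset Γ t), false)] =
      (FreeGroup.of (baseCoset t))⁻¹ from rfl, map_inv, ← splitting_of_self, ← map_inv]
    simp [wordProd]
  · rw [← FreeGroup.of, ← splitting_of_self]
    simp [wordProd]

theorem freePart_wordProd_singleton {ε : Bool} :
    freePart t (wordProd [(t, ε)] : GG Γ) = FreeGroup.mk [(baseCoset t, ε)] := by
  rw [freePart, splitting_wordProd_singleton, SemidirectProduct.left_inl]

theorem retract_compl_wordProd_singleton {ε : Bool} :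
    retract ({t}ᶜ : Set V) (wordProd [(t, ε)] : GG Γ) = 1 := by
  rw [← splitting_right, splitting_wordProd_singleton, SemidirectProduct.right_inl]

theorem cosetAut_mk (g : GG Γ) (L : List (LinkCoset Γ t × Bool)) :
    cosetAut t g (FreeGroup.mk L) = FreeGroup.mk (L.map fun c => (g • c.1, c.2)) :=
  rfl

theorem freePart_mul_wordProd_singleton {ε : Bool} : freePart t (x * wordProd [(t, ε)]) =
    freePart t x * FreeGroup.mk [(retract ({t}ᶜ : Set V) x • baseCoset t, ε)] := by
  rw [freePart_mul, freePart_wordProd_singleton, cosetAut_mk, List.map_singleton]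

theorem freePart_mul_of_mem (h : y ∈ parabolic ({t}ᶜ : Set V)) :
    freePart t (x * y) = freePart t x := by
  rw [freePart_mul, freePart_eq_one_iff.2 h, map_one, mul_one]

theorem exists_eq_append_cons_of_freePart_mem_startsWith [DecidableEq (LinkCoset Γ t)] {ε : Bool}
    (h : freePart t (wordProd w : GG Γ) ∈ FreeGroup.startsWith (baseCoset t, ε)) :
    ∃ w₁ w₂, w = w₁ ++ (t, ε) :: w₂ ∧ (wordProd w₁ : GG Γ) ∈ parabolic (perp Γ {t}) := by
  induction w using List.reverseRecOn with
  | nil =>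
    rw [wordProd_nil, freePart_one] at h
    exact absurd rfl (FreeGroup.startsWith.ne_one _ h)
  | append_singleton w s ih =>
    by_cases hw : freePart t (wordProd w : GG Γ) ∈ FreeGroup.startsWith (baseCoset t, ε)
    · obtain ⟨w₁, w₂, rfl, hw₁⟩ := ih hw
      exact ⟨w₁, w₂ ++ [s], by simp, hw₁⟩
    obtain ⟨v, δ⟩ := s
    rw [wordProd_append] at h
    obtain rfl | hv := eq_or_ne v t
    · rw [freePart_mul_wordProd_singleton] at h
      obtain ⟨hone, heq⟩ := freeGroup_eq_one_of_mul_mk_singleton_mem_startsWith hw h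
      rw [mem_parabolic_iff.1 (freePart_eq_one_iff.1 hone), Prod.mk.injEq] at heq
      exact ⟨w, [], by rw [heq.2], smul_baseCoset_eq_self_iff.1 heq.1⟩
    · rw [freePart_mul_of_mem (wordProd_singleton_mem_parabolic hv)] at h
      exact absurd h hw

theorem wordProd_append_cons (h : (wordProd w : GG Γ) ∈ parabolic (perp Γ {s.1})) :
    (wordProd (w ++ s :: w') : GG Γ) = wordProd [s] * wordProd (w ++ w') := by
  have hcomm : Commute (wordProd [s]) (wordProd w : GG Γ) :=
    commute_of_subset_perp (S := {s.1}) subset_rfl (wordProd_singleton_mem_parabolic rfl) h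
  rw [wordProd_append, wordProd_append, wordProd_cons, ← mul_assoc, ← mul_assoc, hcomm.eq]

end Words

theorem parabolic_singleton : (parabolic {t} : Subgroup (GG Γ)) = Subgroup.zpowers (of t) := by
  rw [parabolic, Set.image_singleton, Subgroup.zpowers_eq_closure]

theorem commute_of_mem_parabolic_perp (h : x ∈ parabolic (perp Γ {t})) : Commute x (of t) :=
  (commute_of_subset_perp (S := {t}) subset_rfl (of_mem_parabolic rfl) h).symm

theorem conj_of_injective (h : p * of a * p⁻¹ = q * of b * q⁻¹) : a = b := by
  have hmem : (q⁻¹ * p) * of a * (q⁻¹ * p)⁻¹ ∈ (parabolic {b} : Subgroup (GG Γ)) := by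
    rw [show (q⁻¹ * p) * of a * (q⁻¹ * p)⁻¹ = q⁻¹ * (p * of a * p⁻¹) * q by group, h,
      show q⁻¹ * (q * of b * q⁻¹) * q = of b by group]
    exact of_mem_parabolic rfl
  exact (isEssential_of a).subset_of_conj_mem hmem rfl

theorem conj_eq_conj_retract {T : Set V} (hx : x ∈ parabolic T)
    (hconj : z * x * z⁻¹ ∈ parabolic T) :
    z * x * z⁻¹ = retract T z * x * (retract T z)⁻¹ := by
  rw [← mem_parabolic_iff.1 hconj, map_mul, map_mul, map_inv, mem_parabolic_iff.1 hx]

theorem exists_conj_of_of_commute (h : Commute (p * of a * p⁻¹) (q * of b * q⁻¹))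
    (hne : p * of a * p⁻¹ ≠ q * of b * q⁻¹) :
    ∃ r, p * of a * p⁻¹ = r * of a * r⁻¹ ∧ q * of b * q⁻¹ = r * of b * r⁻¹ := by
  obtain ⟨s, rfl⟩ : ∃ s, q = p * s := ⟨p⁻¹ * q, by group⟩
  have hconj : p * s * of b * (p * s)⁻¹ = p * (s * of b * s⁻¹) * p⁻¹ := by group
  rw [hconj, Commute.conj_iff] at h
  have conj_eq {T : Set V} (hT : s * of b * s⁻¹ ∈ parabolic T) :
      s * of b * s⁻¹ = retract T s * of b * (retract T s)⁻¹ :=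
    conj_eq_conj_retract (of_mem_parabolic ((isEssential_of b).subset_of_conj_mem hT rfl)) hT
  obtain hperp | hess := (isEssential_of a).conj_mem_perp_or_isEssential_conj .of_subsingleton
    (isEssential_of b) .of_subsingleton h
  · have hcomm : Commute (retract (perp Γ {a}) s) (of a) :=
      commute_of_mem_parabolic_perp (retract_mem _ _)
    refine ⟨p * retract (perp Γ {a}) s, ?_, by rw [hconj, conj_eq hperp]; group⟩
    rw [mul_assoc p (retract _ s), hcomm.eq]
    group
  · obtain rfl : b = a := (isEssential_of b).subset_of_conj_mem hess.1 rfl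
    have hcomm : Commute (of b) (retract {b} s) :=
      commute_of_forall_commute (by rintro _ rfl; rfl) (retract_mem _ _)
    exact absurd (by rw [hconj, conj_eq hess.1, ← hcomm.eq, mul_inv_cancel_right]) hne

section Side

variable {ε : Bool}

theorem exists_freePart_eq_zpow_of_commute (hz : Commute z (of t)) :
    ∃ j : ℤ, freePart t z = FreeGroup.of (baseCoset t) ^ j := by
  have hsplit := mem_parabolic_iff.1 ((isEssential_of t).mem_of_commute hz)
  rw [retract_union subset_rfl] at hsplit
  obtain ⟨j, hj⟩ := Subgroup.mem_zpowers_iff.1 (parabolic_singleton ▸ retract_mem {t} z)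
  have hperp : retract (perp Γ {t}) z ∈ parabolic ({t}ᶜ : Set V) :=
    parabolic_mono (fun v hv => (mem_perp_singleton.1 hv).1.symm) (retract_mem _ z)
  refine ⟨j, ?_⟩
  rw [← hsplit, ← hj, freePart_mul_of_mem hperp, freePart, map_zpow, splitting_of_self, ← map_zpow,
    SemidirectProduct.left_inl]

theorem commute_freeEval_mk {L : List (LinkCoset Γ t × Bool)} (hL : ∀ c ∈ L, c.1 = baseCoset t) :
    Commute (freeEval t (FreeGroup.mk L)) (of t) := by
  have hbase : freeEval t (FreeGroup.of (baseCoset t)) = (of t : GG Γ) := by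
    rw [freeEval_of_mk, one_mul, inv_one, mul_one]
  rw [freeEval, FreeGroup.lift_apply_of] at hbase
  rw [freeEval, FreeGroup.lift_mk]
  refine Commute.list_prod_left _ _ (List.forall_mem_map.2 fun c hc => ?_)
  obtain ⟨_, _ | _⟩ := c <;> obtain rfl := hL _ hc <;> simp [hbase]

variable [DecidableEq (LinkCoset Γ t)]

/-- The prefix cancels the free part of `r`, so the part of `r` outside of `parabolic {t}ᶜ` is
read off the letters of `z`, which are all fixed by `of a`. -/
theorem commute_of_startsWith_freePart_mul_of_ne (hat : a ≠ t) (hz : Commute z (of a))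
    (hrz : freePart t (r * z) ∈ FreeGroup.startsWith (baseCoset t, ε))
    (hr : freePart t r ∉ FreeGroup.startsWith (baseCoset t, ε)) :
    Commute (r * of a * r⁻¹) (of t) := by
  set κ := retract ({t}ᶜ : Set V) r
  set k := κ * of a * κ⁻¹
  rw [freePart_mul, ← FreeGroup.mk_toWord (x := cosetAut t κ _)] at hrz
  obtain ⟨L₁, L₂, hL, hL₁⟩ := freeGroup_exists_prefix_of_mul_mk_mem_startsWith hr hrz
  have hfix : cosetAut t k (cosetAut t κ (freePart t z)) = cosetAut t κ (freePart t z) := by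
    rw [← MulAut.mul_apply, ← map_mul, inv_mul_cancel_right, map_mul, MulAut.mul_apply,
      cosetAut_freePart_of_commute (of_mem_parabolic hat) hz.symm]
  have hletter : ∀ c ∈ L₁ ++ (baseCoset t, ε) :: L₂, k • c.1 = c.1 := fun c hc =>
    smul_eq_self_of_cosetAut_eq_self hfix (hL ▸ hc)
  have hfix' : cosetAut t k (freePart t r) = freePart t r := by
    rw [eq_inv_of_mul_eq_one_left hL₁, map_inv, cosetAut_mk, List.map_congr_left
      fun c hc => by rw [hletter c (List.mem_append_left _ hc)], List.map_id']
  have hconj : r * of a * r⁻¹ = k := by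
    have hcomm := freeEval_cosetAut t k (freePart t r)
    rw [hfix', eq_mul_inv_iff_mul_eq] at hcomm
    rw [← freeEval_mul_retract t r]
    calc
      freeEval t (freePart t r) * κ * of a * (freeEval t (freePart t r) * κ)⁻¹ =
          freeEval t (freePart t r) * k * (freeEval t (freePart t r))⁻¹ := by simp only [k]; group
      _ = k := by rw [hcomm, mul_inv_cancel_right]
  rw [hconj]
  exact commute_of_mem_parabolic_perp <| smul_baseCoset_eq_self_iff.1 <|
    hletter (baseCoset t, ε) (by simp)

theorem commute_of_startsWith_freePart_mul (hz : Commute z (of t))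
    (hrz : freePart t (r * z) ∈ FreeGroup.startsWith (baseCoset t, ε))
    (hr : freePart t r ∉ FreeGroup.startsWith (baseCoset t, ε)) :
    Commute (r * of t * r⁻¹) (of t) := by
  set κ := retract ({t}ᶜ : Set V) r with hκ
  rw [freePart_mul, ← FreeGroup.mk_toWord (x := cosetAut t _ _)] at hrz
  obtain ⟨L₁, L₂, hL, hL₁⟩ := freeGroup_exists_prefix_of_mul_mk_mem_startsWith hr hrz
  obtain ⟨j, hj⟩ := exists_freePart_eq_zpow_of_commute hz
  rw [hj, map_zpow, cosetAut_of] at hL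
  have hletter : ∀ c ∈ L₁ ++ (baseCoset t, ε) :: L₂, c.1 = κ • baseCoset t := fun c hc =>
    freeGroup_fst_eq_of_mem_toWord_of_zpow (hL ▸ hc)
  have hbase : κ • baseCoset t = baseCoset t := (hletter (baseCoset t, ε) (by simp)).symm
  have hL₁comm : Commute (freeEval t (FreeGroup.mk L₁)) (of t) := commute_freeEval_mk fun c hc =>
    (hletter c (List.mem_append_left _ hc)).trans hbase
  have hcomm : Commute r (of t) := by
    rw [← freeEval_mul_retract t r, eq_inv_of_mul_eq_one_left hL₁, map_inv]
    exact hL₁comm.inv_left.mul_left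
      (commute_of_mem_parabolic_perp (smul_baseCoset_eq_self_iff.1 hbase))
  rw [hcomm.eq, mul_inv_cancel_right]

end Side

open scoped Classical in
/-- A non-commuting pair of conjugates of vertices, the second being a vertex `t`, has a side: the
first letter `of t` or `(of t)⁻¹` that the conjugator of the first one has to cross. It does not
depend on the conjugator, see `IsOnSide.freePart_mem_startsWith`. -/
def IsOnSide (s : V × Bool) (x : GG Γ) : Prop :=
  ¬Commute x (of s.1) ∧
    ∃ p a, x = p * of a * p⁻¹ ∧ freePart s.1 p ∈ FreeGroup.startsWith (baseCoset s.1, s.2)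

variable {s : V × Bool} {w : List (V × Bool)}

theorem IsOnSide.freePart_mem_startsWith [DecidableEq (LinkCoset Γ s.1)] (h : IsOnSide s x)
    (hx : x = q * of a * q⁻¹) : freePart s.1 q ∈ FreeGroup.startsWith (baseCoset s.1, s.2) := by
  obtain ⟨hne, p, a', rfl, hp⟩ := h
  obtain rfl := conj_of_injective hx
  by_contra hq
  have hcomm : Commute (q⁻¹ * p) (of a') := by
    rw [commute_iff_eq, ← mul_inv_eq_iff_eq_mul]
    rw [show q⁻¹ * p * of a' * (q⁻¹ * p)⁻¹ = q⁻¹ * (p * of a' * p⁻¹) * q by group, hx]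
    group
  rw [← mul_inv_cancel_left q p] at hp
  rw [hx] at hne
  obtain rfl | hat := eq_or_ne a' s.1
  · exact hne (commute_of_startsWith_freePart_mul hcomm (by convert hp) hq)
  · exact hne (commute_of_startsWith_freePart_mul_of_ne hat hcomm (by convert hp) hq)

theorem IsOnSide.of_commute (h : IsOnSide s x) (hxy : Commute x y) (hy : IsVertexConj y)
    (hys : ¬Commute y (of s.1)) : IsOnSide s y := by
  classical
  obtain rfl | hne := eq_or_ne x y
  · exact h
  obtain ⟨p, a, hp, -⟩ := h.2
  obtain ⟨q, b, hq⟩ := hy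
  rw [hp, hq] at hxy hne
  obtain ⟨r, hr, hr'⟩ := exists_conj_of_of_commute hxy hne
  exact ⟨hys, r, b, hq.trans hr', by convert h.freePart_mem_startsWith (hp.trans hr)⟩

/-- The length of a shortest word conjugating a vertex to `x`; it is `0` when `x` is not a conjugate
of a vertex. -/
noncomputable def conjugatorLength (x : GG Γ) : ℕ :=
  sInf {m | ∃ w a, w.length = m ∧ x = wordProd w * of a * (wordProd w)⁻¹}

theorem conjugatorLength_le (h : x = wordProd w * of a * (wordProd w)⁻¹) :
    conjugatorLength x ≤ w.length :=
  Nat.sInf_le ⟨w, a, rfl, h⟩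

theorem IsVertexConj.exists_length_eq_conjugatorLength (h : IsVertexConj x) :
    ∃ w a, w.length = conjugatorLength x ∧ x = wordProd w * of a * (wordProd w)⁻¹ := by
  obtain ⟨p, a, rfl⟩ := h
  obtain ⟨w, rfl⟩ := wordProd_surjective p
  have hne : {m | ∃ (w' : List (V × Bool)) (a' : V), w'.length = m ∧ (wordProd w * of a *
      (wordProd w)⁻¹ : GG Γ) = wordProd w' * of a' * (wordProd w')⁻¹}.Nonempty :=
    ⟨w.length, w, a, rfl, rfl⟩
  exact Nat.sInf_mem hne

theorem conjugatorLength_of : conjugatorLength (of t : GG Γ) = 0 :=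
  Nat.le_zero.1 (conjugatorLength_le (w := []) (a := t) (by simp [wordProd_nil]))

theorem IsOnSide.isVertexConj (h : IsOnSide s x) : IsVertexConj x :=
  h.2.imp fun _ => Exists.imp fun _ => And.left

theorem IsOnSide.conjugatorLength_lt (h : IsOnSide s x) :
    conjugatorLength ((wordProd [s])⁻¹ * x * wordProd [s]) < conjugatorLength x := by
  classical
  obtain ⟨w, a, hw, hx⟩ := h.isVertexConj.exists_length_eq_conjugatorLength
  obtain ⟨w₁, w₂, rfl, hw₁⟩ :=
    exists_eq_append_cons_of_freePart_mem_startsWith (h.freePart_mem_startsWith hx)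
  have hle : conjugatorLength ((wordProd [s])⁻¹ * x * wordProd [s]) ≤ (w₁ ++ w₂).length :=
    conjugatorLength_le (a := a) (by rw [hx, wordProd_append_cons (s := s) hw₁]; group)
  rw [← hw]
  simp only [List.length_append, List.length_cons] at hle ⊢
  omega

/-- A conjugator of minimal length does not start with a letter that commutes with `x`, nor with a
letter that cancels against a later one. -/
theorem IsVertexConj.exists_isOnSide (h : IsVertexConj x) (h0 : conjugatorLength x ≠ 0) :
    ∃ s, IsOnSide s x := by
  obtain ⟨_ | ⟨⟨t, ε⟩, w⟩, a, hw, hx⟩ := h.exists_length_eq_conjugatorLength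
  · exact absurd hw.symm h0
  rw [List.length_cons] at hw
  classical
  refine ⟨(t, ε), fun hcomm => ?_, wordProd ((t, ε) :: w), a, hx, ?_⟩
  · have hx' : x = wordProd w * of a * (wordProd w)⁻¹ := by
      have hconj : (wordProd [(t, ε)])⁻¹ * x * wordProd [(t, ε)] = x := by
        rw [mul_assoc, (commute_wordProd_singleton_iff.2 hcomm).eq, inv_mul_cancel_left]
      rw [← hconj, hx, wordProd_cons (w := w)]
      group
    have := conjugatorLength_le hx'
    omega
  · by_contra hno
    have hfree : freePart t (wordProd ((t, ε) :: w) : GG Γ) =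
        FreeGroup.mk [(baseCoset t, ε)] * freePart t (wordProd w) := by
      rw [wordProd_cons, freePart_mul, retract_compl_wordProd_singleton, map_one,
        MulAut.one_apply, freePart_wordProd_singleton]
    simp only [hfree] at hno
    obtain ⟨w₁, w₂, rfl, hw₁⟩ := exists_eq_append_cons_of_freePart_mem_startsWith
      (Not.imp_symm (FreeGroup.startsWith_mk_mul (w := (baseCoset t, ε)) _) hno)
    have hcancel : (wordProd ((t, ε) :: (w₁ ++ (t, !ε) :: w₂)) : GG Γ) = wordProd (w₁ ++ w₂) := by
      rw [wordProd_cons, wordProd_append_cons (s := (t, !ε)) hw₁,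
        ← inv_wordProd_singleton (s := (t, ε)), mul_inv_cancel_left]
    have := conjugatorLength_le (hcancel ▸ hx)
    simp only [List.length_append, List.length_cons] at hw this
    omega

end GG

/-! ### Folding -/

section Geodesic

theorem exists_pathGraph_embedding_eq_getVert {V : Type*} {G : SimpleGraph V} {u v : V} {n : ℕ}
    {p : G.Walk u v} (hp : p.length = G.dist u v) (hn : n ≤ p.length + 1) :
    ∃ e : pathGraph n ↪g G, ∀ i, e i = p.getVert i := by
  have hdist : ∀ i ≤ p.length, G.dist u (p.getVert i) = i := fun i hi => by
    rw [← length_eq_dist_of_subwalk hp (p.isSubwalk_take i), Walk.take_length, min_eq_left hi]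
  have hinj : Function.Injective fun i : Fin n => p.getVert i := fun i j hij => by
    have := congrArg (G.dist u) hij
    dsimp only at this
    rw [hdist i (by omega), hdist j (by omega)] at this
    exact Fin.ext this
  have hadj : ∀ i j : Fin n, G.Adj (p.getVert i) (p.getVert j) ↔ (pathGraph n).Adj i j := by
    refine fun i j => ⟨fun hadj => ?_, fun hadj => ?_⟩
    · have hij : (i : ℕ) ≠ j := fun h => hadj.ne (by rw [h])
      have := hadj.diff_dist_adj (u := u)
      rw [hdist i (by omega), hdist j (by omega)] at this
      exact pathGraph_adj.2 (by omega)
    · rcases pathGraph_adj.1 hadj with h | h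
      · exact h ▸ p.adj_getVert_succ (by omega)
      · exact (h ▸ p.adj_getVert_succ (by omega) : G.Adj (p.getVert j) (p.getVert i)).symm
  exact ⟨⟨⟨_, hinj⟩, hadj _ _⟩, fun _ => rfl⟩

theorem pathGraph_isIndContained_of_le_dist {V : Type*} {G : SimpleGraph V} {u v : V} {n : ℕ}
    (huv : G.Reachable u v) (hn : n ≤ G.dist u v + 1) : pathGraph n ⊴ G := by
  obtain ⟨p, hp⟩ := huv.exists_walk_length_eq_dist
  obtain ⟨e, -⟩ := exists_pathGraph_embedding_eq_getVert hp (hp ▸ hn)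
  exact ⟨e⟩

theorem le_add_dist_of_forall_adj {V : Type*} {G : SimpleGraph V} {u v : V} {l : V → ℕ}
    (huv : G.Reachable u v) (hl : ∀ x y, G.Adj x y → l y ≤ l x + 1) : l v ≤ l u + G.dist u v := by
  obtain ⟨p, hp⟩ := huv.exists_walk_length_eq_dist
  rw [← hp]
  clear hp huv
  induction p with
  | nil => simp
  | cons h p ih =>
    have := hl _ _ h
    rw [Walk.length_cons]
    omega

/-- Relabelling `none`, which bridges the deleted edges of the path, by `c` makes the labels
1-Lipschitz, so the ends of the path stay at distance `n - 1`. -/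
theorem pathGraph_isIndContained_of_comap_some_le {n : ℕ} {G : SimpleGraph (Option (Fin n))}
    (hle : G.comap some ≤ pathGraph n) {c : Fin n}
    (hc : ∀ i, G.Adj none (some i) → i = c ∨ (pathGraph n).Adj i c)
    (hbridge : ∀ i j, (pathGraph n).Adj i j → ¬G.Adj (some i) (some j) → G.Adj none (some i)) :
    pathGraph n ⊴ G := by
  have : NeZero n := ⟨by rintro rfl; exact c.elim0⟩
  have hreach_of_adj : ∀ i j, (pathGraph n).Adj i j → G.Reachable (some i) (some j) := by
    intro i j hij
    by_cases h : G.Adj (some i) (some j)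
    · exact h.reachable
    · exact (hbridge i j hij h).symm.reachable.trans
        (hbridge j i hij.symm fun h' => h h'.symm).reachable
  have hreach : ∀ i j, G.Reachable (some i) (some j) := fun i j => by
    obtain ⟨p⟩ := pathGraph_preconnected n i j
    induction p with
    | nil => rfl
    | cons h _ ih => exact (hreach_of_adj _ _ h).trans ih
  let label : Option (Fin n) → ℕ := fun x => x.getD c
  have hnear : ∀ i, G.Adj none (some i) → (i : ℕ) ≤ c + 1 ∧ (c : ℕ) ≤ i + 1 := fun i hi => by
    rcases hc i hi with rfl | h
    · omega
    · have := pathGraph_adj.1 h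
      omega
  have hlabel : ∀ x y, G.Adj x y → label y ≤ label x + 1 := by
    rintro (_ | i) (_ | j) hadj
    · exact Nat.le_succ _
    · exact (hnear j hadj).1
    · exact (hnear i hadj.symm).2
    · have := pathGraph_adj.1 (hle (show (G.comap some).Adj i j from hadj))
      simp only [label, Option.getD_some]
      omega
  let last : Fin n := ⟨n - 1, Nat.sub_one_lt (NeZero.ne n)⟩
  have hlast : n - 1 ≤ 0 + G.dist (some 0) (some last) :=
    le_add_dist_of_forall_adj (hreach 0 last) hlabel
  exact pathGraph_isIndContained_of_le_dist (hreach 0 last) (by omega)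

theorem pathGraph_exists_forall_eq_or_adj {n : ℕ} {P N : Fin n → Prop} {i j : Fin n} (hi : P i)
    (hj : N j) (h : ∀ i j, P i → N j → (pathGraph n).Adj i j) :
    ∃ c, ∀ k, P k ∨ N k → k = c ∨ (pathGraph n).Adj k c := by
  by_cases hP : ∀ k, P k → k = i
  · exact ⟨i, fun k hk => hk.imp (hP k) fun hk => (h i k hi hk).symm⟩
  · push Not at hP
    obtain ⟨i', hi', hne⟩ := hP
    refine ⟨j, fun k hk => hk.symm.imp (fun hk => ?_) fun hk => h k j hk hj⟩
    have h₁ := pathGraph_adj.1 (h i k hi hk)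
    have h₂ := pathGraph_adj.1 (h i' k hi' hk)
    have h₃ := pathGraph_adj.1 (h i j hi hj)
    have h₄ := pathGraph_adj.1 (h i' j hi' hj)
    omega

end Geodesic

namespace GG

variable {V : Type} {Γ : SimpleGraph V} {s : V × Bool} {x y : GG Γ} {n : ℕ}

open scoped Classical in
/-- The fold along `s`: the elements on the side of `s` are conjugated by the letter `s`, which
makes them shorter, and the others are fixed. -/
noncomputable def fold (s : V × Bool) (x : GG Γ) : GG Γ :=
  if IsOnSide s x then (wordProd [s])⁻¹ * x * wordProd [s] else x

theorem fold_of_isOnSide (h : IsOnSide s x) : fold s x = (wordProd [s])⁻¹ * x * wordProd [s] :=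
  if_pos h

theorem fold_of_not_isOnSide (h : ¬IsOnSide s x) : fold s x = x :=
  if_neg h

theorem IsVertexConj.fold (h : IsVertexConj x) (s : V × Bool) : IsVertexConj (fold s x) := by
  by_cases hs : IsOnSide s x
  · simpa only [fold_of_isOnSide hs, inv_inv] using h.conj (wordProd [s])⁻¹
  · rwa [fold_of_not_isOnSide hs]

theorem conjugatorLength_fold_le : conjugatorLength (fold s x) ≤ conjugatorLength x := by
  by_cases hs : IsOnSide s x
  · rw [fold_of_isOnSide hs]
    exact hs.conjugatorLength_lt.le
  · rw [fold_of_not_isOnSide hs]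

theorem commute_fold_right_iff (hx : Commute x (of s.1)) :
    Commute x (fold s y) ↔ Commute x y := by
  by_cases hs : IsOnSide s y
  · have := commute_conj_right_iff_of_commute (z := y)
      (commute_wordProd_singleton_iff.2 hx).inv_right
    rwa [inv_inv, ← fold_of_isOnSide hs] at this
  · rw [fold_of_not_isOnSide hs]

theorem fold_of_commute (hx : Commute x (of s.1)) : fold s x = x :=
  fold_of_not_isOnSide fun h => h.1 hx

theorem commute_fold_iff (hxy : IsOnSide s x → IsOnSide s y ∨ Commute y (of s.1))
    (hyx : IsOnSide s y → IsOnSide s x ∨ Commute x (of s.1)) :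
    Commute (fold s x) (fold s y) ↔ Commute x y := by
  by_cases hx : Commute x (of s.1)
  · rw [fold_of_commute hx, commute_fold_right_iff hx]
  by_cases hy : Commute y (of s.1)
  · rw [fold_of_commute hy, Commute.symm_iff, commute_fold_right_iff hy, Commute.symm_iff]
  by_cases hsx : IsOnSide s x
  · rw [fold_of_isOnSide hsx, fold_of_isOnSide ((hxy hsx).resolve_right hy)]
    simpa only [inv_inv] using Commute.conj_iff (h := (wordProd [s])⁻¹) (a := x) (b := y)
  · rw [fold_of_not_isOnSide hsx, fold_of_not_isOnSide fun h => (hyx h).elim hsx hx]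

theorem pathGraph_isIndContained_nonCommutingGraph_fold {x : Fin n → GG Γ}
    (hx : ∀ i, IsVertexConj (x i)) (hpath : nonCommutingGraph x = pathGraph n) (s : V × Bool) :
    pathGraph n ⊴ nonCommutingGraph fun i : Option (Fin n) => i.elim (of s.1) (fold s ∘ x) := by
  set F : Option (Fin n) → GG Γ := fun i => i.elim (of s.1) (fold s ∘ x)
  let P : Fin n → Prop := fun i => IsOnSide s (x i)
  let N : Fin n → Prop := fun i => ¬Commute (x i) (of s.1) ∧ ¬IsOnSide s (x i)
  have hPN : ∀ i j, P i → N j → (pathGraph n).Adj i j := fun i j hi hj => by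
    by_contra hij
    exact hj.2 (hi.of_commute ((commute_iff_of_nonCommutingGraph_eq hpath).2 hij) (hx j) hj.1)
  have hnone : ∀ i, (nonCommutingGraph F).Adj none (some i) ↔ P i ∨ N i := fun i => by
    have : Commute (of s.1) (fold s (x i)) ↔ Commute (of s.1) (x i) :=
      commute_fold_right_iff (Commute.refl _)
    rw [nonCommutingGraph_adj, show F (some i) = fold s (x i) from rfl]
    simp only [F, Option.elim_none, this, P, N, Commute.symm_iff (a := of s.1)]
    have := fun h : IsOnSide s (x i) => h.1
    tauto
  have hsome : ∀ i j, ¬(P i ∧ N j) → ¬(P j ∧ N i) →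
      ((nonCommutingGraph F).Adj (some i) (some j) ↔ (pathGraph n).Adj i j) := fun i j hij hji => by
    rw [← hpath]
    refine not_congr (commute_fold_iff ?_ ?_) <;> simp only [P, N] at * <;> tauto
  by_cases hmixed : ∃ i j, P i ∧ N j
  · obtain ⟨i, j, hi, hj⟩ := hmixed
    obtain ⟨c, hc⟩ := pathGraph_exists_forall_eq_or_adj hi hj hPN
    refine pathGraph_isIndContained_of_comap_some_le (c := c) (fun i j hadj => ?_)
      (fun i hi => hc i ((hnone i).1 hi)) fun i j hadj hij => (hnone i).2 ?_
    · by_cases h : P i ∧ N j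
      · exact hPN i j h.1 h.2
      by_cases h' : P j ∧ N i
      · exact (hPN j i h'.1 h'.2).symm
      exact (hsome i j h h').1 hadj
    · by_contra h
      exact hij ((hsome i j (fun h' => h (.inl h'.1)) fun h' => h (.inr h'.2)).2 hadj)
  · push Not at hmixed
    exact ⟨⟨⟨some, Option.some_injective _⟩, hsome _ _ (fun h => hmixed _ _ h.1 h.2)
      fun h => hmixed _ _ h.1 h.2⟩⟩

theorem exists_nonCommutingGraph_of_eq_pathGraph {x : Fin n → GG Γ} (hx : ∀ i, IsVertexConj (x i))
    (hpath : nonCommutingGraph x = pathGraph n) :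
    ∃ a : Fin n → V, nonCommutingGraph (fun i => (of (a i) : GG Γ)) = pathGraph n := by
  induction hm : ∑ i, conjugatorLength (x i) using Nat.strong_induction_on generalizing x with
  | _ m ih =>
  by_cases hzero : ∀ i, conjugatorLength (x i) = 0
  · choose w a hw hxa using fun i => (hx i).exists_length_eq_conjugatorLength
    have hxa : x = fun i => of (a i) := funext fun i => by
      rw [hxa i, List.length_eq_zero_iff.1 ((hw i).trans (hzero i)), wordProd_nil, one_mul, inv_one,
        mul_one]
    exact ⟨a, hxa ▸ hpath⟩
  push Not at hzero
  obtain ⟨k, hk⟩ := hzero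
  obtain ⟨s, hs⟩ := (hx k).exists_isOnSide hk
  obtain ⟨e⟩ := pathGraph_isIndContained_nonCommutingGraph_fold hx hpath s
  set F : Option (Fin n) → GG Γ := fun i => i.elim (of s.1) (fold s ∘ x) with hF
  have hFe : ∀ o, IsVertexConj (F o) := by
    rintro (_ | i)
    exacts [isVertexConj_of _, (hx i).fold s]
  refine ih _ ?_ (fun i => hFe (e i)) ?_ rfl
  · calc ∑ i, conjugatorLength (F (e i))
        = ∑ o ∈ Finset.univ.map e.toEmbedding, conjugatorLength (F o) := by
          rw [Finset.sum_map]; rfl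
      _ ≤ ∑ o, conjugatorLength (F o) := Finset.sum_le_sum_of_subset (Finset.subset_univ _)
      _ = ∑ i, conjugatorLength (fold s (x i)) := by
          simp [hF, Fintype.sum_option, conjugatorLength_of]
      _ < ∑ i, conjugatorLength (x i) :=
          Finset.sum_lt_sum (fun i _ => conjugatorLength_fold_le) ⟨k, Finset.mem_univ k, by
            rw [fold_of_isOnSide hs]; exact hs.conjugatorLength_lt⟩
      _ = m := hm
  · ext i j
    exact e.map_adj_iff

theorem commute_of_iff {a b : V} : Commute (of a : GG Γ) (of b) ↔ ¬Γ.Adj a b := by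
  refine ⟨fun h hadj => ?_, commute_of⟩
  have ha : (of a : GG Γ) ∈ parabolic ({b}ᶜ : Set V) := of_mem_parabolic hadj.ne
  exact (mem_perp_singleton.1 (of_mem_parabolic_iff.1 (mem_parabolic_perp_of_commute ha h))).2
    hadj.symm

theorem pathGraph_isIndContained_of_isVertexConj (hn : 4 ≤ n) {x : Fin n → GG Γ}
    (hx : ∀ i, IsVertexConj (x i)) (hpath : nonCommutingGraph x = pathGraph n) :
    pathGraph n ⊴ Γ := by
  obtain ⟨a, ha⟩ := exists_nonCommutingGraph_of_eq_pathGraph hx hpath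
  have hadj : ∀ i j, Γ.Adj (a i) (a j) ↔ (pathGraph n).Adj i j := fun i j => by
    rw [← ha, nonCommutingGraph_adj, commute_of_iff, not_not]
  refine ⟨⟨⟨a, fun i j hij => pathGraph_neighborSet_injective hn ?_⟩, hadj _ _⟩⟩
  ext k
  rw [mem_neighborSet, mem_neighborSet, ← hadj, ← hadj, hij]

end GG

/-! ### Linear forests -/

section LinearForest

variable {V : Type} {Λ : SimpleGraph V}

theorem isPath_length_eq_dist_of_isAcyclic (hΛ : Λ.IsAcyclic) {u v : V} {p : Λ.Walk u v}
    (hp : p.IsPath) : p.length = Λ.dist u v := by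
  obtain ⟨q, hq, hlength⟩ := p.reachable.exists_path_of_dist
  have hpq : (⟨p, hp⟩ : Λ.Path u v) = ⟨q, hq⟩ := (hΛ.subsingleton_path u v).elim _ _
  rw [← hlength, Subtype.mk.inj hpq]

theorem IsLinearForest.induce [Finite V] (hΛ : IsLinearForest Λ) (U : Set V) :
    IsLinearForest (Λ.induce U) := by
  refine ⟨hΛ.1.induce U, fun v => le_trans ?_ (hΛ.2 v)⟩
  rw [← Set.ncard_image_of_injective _ Subtype.val_injective]
  exact Set.ncard_le_ncard (Set.image_subset_iff.2 fun _ hw => hw) (Set.toFinite _)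

/-- A path of maximal length in a linear forest is a whole component. -/
theorem IsLinearForest.exists_pathGraph_embedding [Finite V] (hΛ : IsLinearForest Λ)
    (hne : Λ ≠ ⊥) : ∃ n ≥ 2, ∃ e : pathGraph n ↪g Λ,
      ∀ u ∉ Set.range e, ∀ i, ¬Λ.Adj (e i) u := by
  obtain ⟨a, b, hab⟩ := ne_bot_iff_exists_adj.1 hne
  have : Nonempty V := ⟨a⟩
  obtain ⟨v, w, p, hp, hmax⟩ := Walk.exists_isPath_forall_isPath_length_le_length Λ
  have hpos : 1 ≤ p.length := hmax _ _ _ (Walk.IsPath.of_adj hab)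
  obtain ⟨e, he⟩ := exists_pathGraph_embedding_eq_getVert
    (isPath_length_eq_dist_of_isAcyclic hΛ.1 hp) le_rfl
  refine ⟨p.length + 1, by omega, e, fun u hu i hadj => ?_⟩
  have hsupport : u ∉ p.support := fun h => by
    obtain ⟨k, rfl, hk⟩ := Walk.mem_support_iff_exists_getVert.1 h
    exact hu ⟨⟨k, by omega⟩, he _⟩
  have hlt : 0 < (i : ℕ) ∧ (i : ℕ) < p.length := by
    rw [he] at hadj
    refine ⟨Nat.pos_of_ne_zero fun h => ?_, lt_of_le_of_ne (by omega) fun h => ?_⟩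
    · rw [h, Walk.getVert_zero] at hadj
      have := hmax _ _ _ (hp.cons hsupport (h := hadj.symm))
      simp at this
    · rw [h, Walk.getVert_length] at hadj
      have := hmax _ _ _ (hp.concat hsupport hadj)
      simp at this
  let prev : Fin (p.length + 1) := ⟨i - 1, by omega⟩
  let next : Fin (p.length + 1) := ⟨i + 1, by omega⟩
  have hsub : {e prev, e next, u} ⊆ Λ.neighborSet (e i) := by
    rintro x (rfl | rfl | rfl)
    · exact e.map_adj_iff.2 (pathGraph_adj.2 (.inr (by simp only [prev]; omega)))
    · exact e.map_adj_iff.2 (pathGraph_adj.2 (.inl rfl))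
    · exact hadj
  have hcard : ({e prev, e next, u} : Set V).ncard = 3 := by
    refine Set.ncard_eq_three.2 ⟨_, _, _, e.injective.ne (Fin.ne_of_val_ne ?_),
      fun h => hu ⟨_, h⟩, fun h => hu ⟨_, h⟩, rfl⟩
    simp only [prev, next]
    omega
  have := Set.ncard_le_ncard hsub (Set.toFinite _)
  have := hΛ.2 (e i)
  omega

end LinearForest

namespace GG

open scoped commutatorElement

variable {V W : Type} {Λ : SimpleGraph V} {Γ : SimpleGraph W} {φ : GG Λ →* GG Γ} {U : Set V}
  {C D : Set W} {n : ℕ}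

open scoped Classical in
/-- The retraction of `GG Γ` onto the group of an induced subgraph, as opposed to `retract C`, whose
values are in the corresponding subgroup of `GG Γ`. -/
noncomputable def toInduce (C : Set W) : GG Γ →* GG (Γ.induce C) :=
  lift (fun v => if h : v ∈ C then of ⟨v, h⟩ else 1) fun u v _ huv => by
    split_ifs
    exacts [commute_of (by simpa using huv), Commute.one_right _, Commute.one_left _,
      Commute.one_left _]

/-- The inclusion of the group of an induced subgraph. -/
def ofInduce (C : Set W) : GG (Γ.induce C) →* GG Γ :=
  lift (fun v => of v) fun _ _ _ huv => commute_of (by simpa using huv)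

theorem ofInduce_toInduce (x : GG Γ) : ofInduce C (toInduce C x) = retract C x := by
  have : (ofInduce C).comp (toInduce C) = (retract C : GG Γ →* GG Γ) := hom_ext fun v => by
    rw [MonoidHom.comp_apply, toInduce, lift_of]
    split_ifs with h
    · rw [ofInduce, lift_of, retract_of_mem h]
    · rw [map_one, retract_of_notMem h]
  exact DFunLike.congr_fun this x

theorem pathGraph_two_isIndContained {e : pathGraph 2 ↪g Λ} (hC : (Γ.induce C).Connected)
    (h : EmbedsParabolic φ (Set.range e) C) : pathGraph 2 ⊴ Γ.induce C := by
  have hmem : ∀ i, (of (e i) : GG Λ) ∈ parabolic (Set.range e) := fun i =>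
    of_mem_parabolic (Set.mem_range_self i)
  obtain ⟨c, hc, d, hd, hcd⟩ : C.Nontrivial := by
    by_contra hsub
    have hcomm : Commute (φ (of (e 0))) (φ (of (e 1))) :=
      commute_of_isIndepSet ((Set.not_nontrivial_iff.1 hsub).pairwise _)
        (h.map_mem _ (hmem 0)) (h.map_mem _ (hmem 1))
    have hcommutator : ⁅(of (e 0) : GG Λ), of (e 1)⁆ ∈ parabolic (Set.range e) :=
      mul_mem (mul_mem (mul_mem (hmem 0) (hmem 1)) (inv_mem (hmem 0))) (inv_mem (hmem 1))
    have hone : ⁅(of (e 0) : GG Λ), of (e 1)⁆ = 1 :=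
      h.eq_one _ hcommutator
        (by rw [map_commutatorElement, commutatorElement_eq_one_iff_commute.2 hcomm])
    refine commute_of_iff.1 (commutatorElement_eq_one_iff_commute.1 hone) ?_
    exact e.map_adj_iff.2 (by simp [pathGraph_adj])
  have hpos : 0 < (Γ.induce C).dist ⟨c, hc⟩ ⟨d, hd⟩ :=
    hC.pos_dist_of_ne fun heq => hcd (congrArg Subtype.val heq)
  exact pathGraph_isIndContained_of_le_dist (hC.preconnected _ _) (Nat.succ_le_succ hpos)

theorem pathGraph_three_isIndContained {e : pathGraph 3 ↪g Λ} (hC : (Γ.induce C).Connected)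
    (h : EmbedsParabolic φ (Set.range e) C) : pathGraph 3 ⊴ Γ.induce C := by
  have hends : ¬Λ.Adj (e 0) (e 2) := by simp [pathGraph_adj]
  have hindep : Λ.IsIndepSet {e 0, e 2} := by
    rintro _ (rfl | rfl) _ (rfl | rfl) hne
    exacts [(hne rfl).elim, hends, fun hadj => hends hadj.symm, (hne rfl).elim]
  obtain ⟨f⟩ := (h.mono (I := {e 0, e 2}) (by rintro _ (rfl | rfl) <;> simp)
    ).isIndContained_of_isIndepSet (Set.toFinite _) hindep
  have hdist : 1 < (Γ.induce C).dist (f ⟨e 0, .inl rfl⟩) (f ⟨e 2, .inr rfl⟩) := by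
    refine (hC _ _).one_lt_dist_of_ne_of_not_adj (f.injective.ne fun heq => ?_)
      fun hadj => hends (f.map_adj_iff.1 hadj)
    exact absurd (e.injective (congrArg Subtype.val heq)) (by decide)
  exact pathGraph_isIndContained_of_le_dist (hC.preconnected _ _) (Nat.succ_le_succ hdist)

theorem EmbedsParabolic.pathGraph_isIndContained (hn : 2 ≤ n) {e : pathGraph n ↪g Λ}
    (hC : (Γ.induce C).Connected) (h : EmbedsParabolic φ (Set.range e) C) :
    pathGraph n ⊴ Γ.induce C := by
  obtain rfl | rfl | hn : n = 2 ∨ n = 3 ∨ 4 ≤ n := by omega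
  · exact pathGraph_two_isIndContained hC h
  · exact pathGraph_three_isIndContained hC h
  have hinj : ∀ x ∈ parabolic (Set.range e), ((toInduce C).comp φ) x = 1 → x = 1 :=
    fun x hx hx1 => h.eq_one x hx (by
      rw [MonoidHom.comp_apply] at hx1
      rw [← mem_parabolic_iff.1 (h.map_mem x hx), ← ofInduce_toInduce, hx1, map_one])
  obtain ⟨F, hF, hpath⟩ := exists_isPure_nonCommutingGraph_eq e _ hinj
  obtain ⟨x, hx, hpath⟩ := exists_isVertexConj_nonCommutingGraph_eq hF hpath
    (pathGraph_neighborSet_injective hn) (exists_pathGraph_neighborSet_eq_pair (by omega))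
  exact pathGraph_isIndContained_of_isVertexConj hn hx hpath

theorem EmbedsParabolic.isIndContained [Finite V] (hΛ : IsLinearForest Λ) (hD : D.Finite)
    (h : EmbedsParabolic φ U D) : Λ.induce U ⊴ Γ.induce D := by
  induction hm : U.ncard using Nat.strong_induction_on generalizing U D φ with
  | _ m ih =>
  by_cases hbot : Λ.induce U = ⊥
  · refine h.isIndContained_of_isIndepSet (Set.toFinite U) fun u hu v hv _ huv => ?_
    exact (hbot ▸ (show (Λ.induce U).Adj ⟨u, hu⟩ ⟨v, hv⟩ from huv) : (⊥ : SimpleGraph U).Adj _ _)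
  obtain ⟨n, hn, e, he⟩ := (hΛ.induce U).exists_pathGraph_embedding hbot
  let e' : pathGraph n ↪g Λ := (Embedding.induce U).comp e
  have hIU : Set.range e' ⊆ U := by
    rintro _ ⟨i, rfl⟩
    exact (e i).2
  have hperp : U \ Set.range e' ⊆ perp Λ (Set.range e') := by
    rintro u ⟨hu, hue⟩ _ ⟨i, rfl⟩
    have hue' : (⟨u, hu⟩ : U) ∉ Set.range e := fun ⟨k, hk⟩ => hue ⟨k, congrArg Subtype.val hk⟩
    exact ⟨fun heq => hue ⟨i, heq⟩, he _ hue' i⟩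
  obtain ⟨k, rfl⟩ := Nat.exists_eq_add_of_le' (show 1 ≤ n by omega)
  have hconn : (Λ.induce (Set.range e')).Connected :=
    e'.isoInduceRange.connected_iff.1 (pathGraph_connected k)
  have hnt : (Set.range e').Nontrivial :=
    ⟨_, ⟨0, rfl⟩, _, ⟨Fin.last k, rfl⟩, e'.injective.ne (Fin.ne_of_val_ne (by simp; omega))⟩
  have hunion : Set.range e' ∪ U \ Set.range e' = U := Set.union_sdiff_cancel hIU
  rw [← hunion] at h
  obtain ⟨ψ, C, hCD, hC, hpath, hrest⟩ := h.exists_separation hD hconn hnt hperp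
  have hI : Λ.induce (Set.range e') ⊴ Γ.induce C :=
    IsIndContained.trans ⟨e'.isoInduceRange.symm.toEmbedding⟩ (hpath.pathGraph_isIndContained hn hC)
  have hlt : (U \ Set.range e').ncard < m := by
    rw [← hm]
    exact Set.ncard_lt_ncard ⟨Set.sdiff_subset, fun hsub => (hsub (hIU ⟨0, rfl⟩)).2 ⟨0, rfl⟩⟩
  rw [← hunion]
  exact isIndContained_induce_union hI (ih _ hlt (hD.inter_of_left _) hrest rfl) hCD hperp

end GG

theorem statement0_general {V W : Type} [Finite V] (Λ : SimpleGraph V) (Γ : SimpleGraph W)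
    (hΛ : IsLinearForest Λ) (h : ∃ φ : GG Λ →* GG Γ, Function.Injective φ) :
    Nonempty (Λ ↪g Γ) := by
  obtain ⟨φ, hφ⟩ := h
  choose T hT using fun v => GG.exists_finset_mem_parabolic (φ (GG.of v))
  have hmem : ∀ x ∈ GG.parabolic Set.univ, φ x ∈ GG.parabolic (⋃ v, (T v : Set W)) := by
    refine GG.parabolic_le_iff (H := (GG.parabolic _).comap φ).2 fun v _ => ?_
    exact GG.parabolic_mono (Set.subset_iUnion _ v) (hT v)
  have hembeds : GG.EmbedsParabolic φ Set.univ (⋃ v, (T v : Set W)) :=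
    ⟨hmem, fun x _ hx => hφ (hx.trans (map_one φ).symm)⟩
  obtain ⟨f⟩ := hembeds.isIndContained hΛ (Set.finite_iUnion fun v => (T v).finite_toSet)
  exact ⟨(Embedding.induce _).comp (f.comp (induceUnivIso Λ).symm.toEmbedding)⟩

/-- If `Λ` is a linear forest and `G(Λ)` embeds into `G(Γ)`, then `Λ` is an induced
subgraph of `Γ`. -/
theorem statement0 {V W : Type} [Fintype V] [Fintype W]
    (Λ : SimpleGraph V) (Γ : SimpleGraph W) (hΛ : IsLinearForest Λ)
    (h : ∃ φ : GG Λ →* GG Γ, Function.Injective φ) :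
    Nonempty (Λ ↪g Γ) :=
  statement0_general Λ Γ hΛ h
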